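/- Every planar graph G has separation dimension at most 3, and K₄ has separation dimension exactly 3. -/

import Mathlib

/-- A permutation `σ` separates two sets `A`, `B`: all of `A` comes before all
of `B`, or vice versa. -/
def SepPerm {V : Type*} {n : ℕ} (σ : V ≃ Fin n) (A B : Set V) : Prop :=
  (∀ a ∈ A, ∀ b ∈ B, σ a < σ b) ∨ (∀ a ∈ A, ∀ b ∈ B, σ b < σ a)

/-- A family of permutations is pairwise suitable for a graph `G` if every
pair of disjoint edges is separated by some member of the family. -/
def PWSuitable {V : Type*} [Fintype V] (G : SimpleGraph V)
    {k : ℕ} (F : Fin k → (V ≃ Fin (Fintype.card V))) : Prop :=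
  ∀ e ∈ G.edgeSet, ∀ f ∈ G.edgeSet, (∀ x, ¬(x ∈ e ∧ x ∈ f)) →
    ∃ i, SepPerm (F i) {x | x ∈ e} {x | x ∈ f}

/-- The separation dimension of a graph: the minimum size of a pairwise
suitable family of permutations of the vertex set. -/
noncomputable def sepDim {V : Type*} [Fintype V] (G : SimpleGraph V) : ℕ :=
  sInf {k : ℕ | ∃ F : Fin k → (V ≃ Fin (Fintype.card V)), PWSuitable G F}

/-- `f` is a straight-line plane drawing of `G`: vertices go to distinct points
of the plane, disjoint edges have disjoint segments, edges sharing a vertex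
meet only at its image, and no vertex lies on the segment of another edge. -/
def IsPlanarDrawing {V : Type*} (G : SimpleGraph V) (f : V → ℝ × ℝ) : Prop :=
  Function.Injective f ∧
  (∀ a b c d : V, G.Adj a b → G.Adj c d → a ≠ c → a ≠ d → b ≠ c → b ≠ d →
    Disjoint (segment ℝ (f a) (f b)) (segment ℝ (f c) (f d))) ∧
  (∀ a b c : V, G.Adj a b → G.Adj a c → b ≠ c →
    segment ℝ (f a) (f b) ∩ segment ℝ (f a) (f c) = {f a}) ∧
  (∀ a b c : V, G.Adj a b → c ≠ a → c ≠ b → f c ∉ segment ℝ (f a) (f b))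

/-!
A realizer with three keys separates disjoint edges: each of the four pairs of an edge and an end
of the other edge is ranked by one of three keys, and the pigeonhole principle does the rest. As in
Schnyder's theorem, a realizer of a plane graph is built along a canonical order: each new vertex
goes on top of the first key, and just above its last old neighbour to the right, or to the left,
along the contour in the other two.

To obtain a canonical order, put a large triangle around the drawing and add edges until the drawing
is saturated. Its faces are then triangles: the neighbours of an inner vertex, sorted by angle, form
a cycle, and those of a corner of the outer triangle form a path. Mod 2 homology replaces the Jordan
curve theorem. Vertices can be added in lexicographic order, where the lower neighbours of each form
a fan, so every mod 2 cycle bounds. Hence a chord of the contour of a triangulated disk separates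
it, so some contour vertex has no chord; it can be removed, and what remains is again a
triangulated disk.

For `K₄`, the three pairs of disjoint edges need three different permutations.
-/

/-! ### Realizers -/

section Realizer

variable {V α : Type*} {G : SimpleGraph V}

/-- A realizer of `G`: a family of keys on the vertices such that for every edge and every vertex
off that edge some key ranks the vertex above both ends of the edge. For finite `G` this says that
the orders given by the keys realize the incidence poset of `G`, as in Schnyder's theorem. -/
def IsRealizer {ι : Type*} [Preorder α] (G : SimpleGraph V) (κ : ι → V → α) : Prop :=
  ∀ a b c, G.Adj a b → c ≠ a → c ≠ b → ∃ i, κ i a < κ i c ∧ κ i b < κ i c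

lemma IsRealizer.comp_hom {W ι : Type*} [Preorder α] {H : SimpleGraph W} {κ : ι → W → α}
    (h : IsRealizer H κ) (φ : G →g H) (hφ : Function.Injective φ) :
    IsRealizer G fun i => κ i ∘ φ :=
  fun _ _ _ hab hca hcb => h _ _ _ (φ.map_adj hab) (hφ.ne hca) (hφ.ne hcb)

lemma exists_equiv_fin_of_key [LinearOrder α] [Fintype V] (κ : V → α) :
    ∃ σ : V ≃ Fin (Fintype.card V), ∀ x y, κ x < κ y → σ x < σ y := by
  let e := Fintype.equivFin V
  refine ⟨e.trans (Tuple.sort (κ ∘ e.symm)).symm, fun x y h => ?_⟩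
  contrapose! h
  simpa using Tuple.monotone_sort (κ ∘ e.symm) h

/-- Four vertex-edge pairs are ranked by three keys. No key can rank an end of `cd` above `ab` and
an end of `ab` above `cd`, so one of the two edges has both of its ends ranked by a single key. -/
lemma IsRealizer.exists_separates [Preorder α] {κ : Fin 3 → V → α} (h : IsRealizer G κ)
    {a b c d : V} (hab : G.Adj a b) (hcd : G.Adj c d)
    (hac : a ≠ c) (had : a ≠ d) (hbc : b ≠ c) (hbd : b ≠ d) :
    ∃ i, (κ i a < κ i c ∧ κ i a < κ i d ∧ κ i b < κ i c ∧ κ i b < κ i d) ∨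
      (κ i c < κ i a ∧ κ i d < κ i a ∧ κ i c < κ i b ∧ κ i d < κ i b) := by
  obtain ⟨i, hi⟩ := h a b c hab hac.symm hbc.symm
  obtain ⟨j, hj⟩ := h a b d hab had.symm hbd.symm
  obtain ⟨k, hk⟩ := h c d a hcd hac had
  obtain ⟨l, hl⟩ := h c d b hcd hbc hbd
  have hki : k ≠ i := by rintro rfl; exact lt_asymm hk.1 hi.1
  have hkj : k ≠ j := by rintro rfl; exact lt_asymm hk.2 hj.1
  have hli : l ≠ i := by rintro rfl; exact lt_asymm hl.1 hi.2
  have hlj : l ≠ j := by rintro rfl; exact lt_asymm hl.2 hj.2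
  obtain rfl | rfl : i = j ∨ k = l := by omega
  · exact ⟨i, Or.inl ⟨hi.1, hj.1, hi.2, hj.2⟩⟩
  · exact ⟨k, Or.inr ⟨hk.1, hk.2, hl.1, hl.2⟩⟩

lemma IsRealizer.exists_pwSuitable [LinearOrder α] [Fintype V] {κ : Fin 3 → V → α}
    (h : IsRealizer G κ) : ∃ F : Fin 3 → (V ≃ Fin (Fintype.card V)), PWSuitable G F := by
  choose F hF using fun i => exists_equiv_fin_of_key (κ i)
  refine ⟨F, fun e he f hf hd => ?_⟩
  induction e with | _ a b
  induction f with | _ c d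
  rw [SimpleGraph.mem_edgeSet] at he hf
  simp only [Sym2.mem_iff, not_and, not_or] at hd
  obtain ⟨hac, had⟩ := hd a (Or.inl rfl)
  obtain ⟨hbc, hbd⟩ := hd b (Or.inr rfl)
  obtain ⟨i, hi⟩ := h.exists_separates he hf hac had hbc hbd
  refine ⟨i, hi.imp ?_ ?_⟩ <;> rintro ⟨h1, h2, h3, h4⟩ <;>
    simp only [Set.mem_ofPred_eq, Sym2.mem_iff] <;>
    rintro x (rfl | rfl) y (rfl | rfl) <;> apply hF <;> assumption

lemma IsRealizer.sepDim_le_three [LinearOrder α] [Fintype V] {κ : Fin 3 → V → α}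
    (h : IsRealizer G κ) : sepDim G ≤ 3 :=
  Nat.sInf_le h.exists_pwSuitable

end Realizer

/-! ### Canonical orders -/

section CanonicalOrder

variable {V α : Type*} {G : SimpleGraph V} {S : Finset V}

/-- A relaxed form of the canonical orderings of de Fraysseix, Pach and Pollack.
`CanonicalOrder G S c` says that the vertex set `S` can be built from two vertices by adding one
vertex `v` at a time, where the earlier neighbours of `v` lie in a block `a, M, b` of consecutive
vertices of the contour and `v` replaces the interior `M` of that block; `c` is the last contour.
-/
inductive CanonicalOrder [DecidableEq V] (G : SimpleGraph V) : Finset V → List V → Prop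
  | base (s t : V) (hst : s ≠ t) : CanonicalOrder G {s, t} [s, t]
  | step (S : Finset V) (A B M : List V) (a b v : V) :
      CanonicalOrder G S (A ++ a :: M ++ b :: B) → v ∉ S →
      (∀ w ∈ S, G.Adj v w → w ∈ a :: M ++ [b]) →
      CanonicalOrder G (insert v S) (A ++ a :: v :: b :: B)

/-- The keys `t`, `l`, `r` realize `G` on `S`, and the contour `c` consists of elements that are
minimal in `S` with respect to the pair `(l, r)`; it is listed in decreasing order of `l`. -/
structure ContourKeys [Preorder α] (G : SimpleGraph V) (S : Finset V) (c : List V)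
    (t l r : V → α) : Prop where
  subset : ∀ x ∈ c, x ∈ S
  left : c.Pairwise (fun x y => l y < l x)
  right : c.Pairwise (fun x y => r x < r y)
  minimal : ∀ w ∈ c, ∀ z ∈ S, z ≠ w → l w < l z ∨ r w < r z
  edge : ∀ x ∈ S, ∀ y ∈ S, ∀ z ∈ S, G.Adj x y → z ≠ x → z ≠ y →
    (t x < t z ∧ t y < t z) ∨ (l x < l z ∧ l y < l z) ∨ (r x < r z ∧ r y < r z)

/-- In the key `l`, the vertex `v` comes directly after `b` among the vertices of `S`. -/
def IsJustAbove [Preorder α] (l : V → α) (S : Finset V) (b v : V) : Prop :=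
  l b < l v ∧ ∀ x ∈ S, l b < l x → l v < l x

lemma exists_isJustAbove [LinearOrder α] [DenselyOrdered α] [NoMinOrder α] [NoMaxOrder α]
    (l : V → α) {v : V} (hv : v ∉ S) {b : V} (hb : b ∈ S) :
    ∃ l' : V → α, (∀ x ∈ S, l' x = l x) ∧ IsJustAbove l' S b v := by
  classical
  have : Nonempty α := ⟨l b⟩
  obtain ⟨m, hlo, hhi⟩ := Order.exists_between_finsets {l b} {y ∈ S.image l | l b < y} (by simp)
  have hl' : ∀ x ∈ S, Function.update l v m x = l x := fun x hx =>
    Function.update_of_ne (ne_of_mem_of_not_mem hx hv) _ _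
  refine ⟨Function.update l v m, hl', ?_, fun x hx h => ?_⟩
  · simpa [hl' b hb] using hlo
  · rw [hl' b hb, hl' x hx] at h
    simpa [hl' x hx] using
      hhi _ (Finset.mem_filter.mpr ⟨Finset.mem_image_of_mem l hx, h⟩)

lemma exists_forall_key_lt [LinearOrder α] [NoMaxOrder α] [Nonempty α] (t : V → α) {v : V}
    (hv : v ∉ S) : ∃ t' : V → α, (∀ x ∈ S, t' x = t x) ∧ ∀ x ∈ S, t' x < t' v := by
  classical
  obtain ⟨T, hT⟩ := (S.image t).exists_le
  obtain ⟨T', hT'⟩ := exists_gt T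
  have ht' : ∀ x ∈ S, Function.update t v T' x = t x := fun x hx =>
    Function.update_of_ne (ne_of_mem_of_not_mem hx hv) _ _
  refine ⟨Function.update t v T', ht', fun x hx => ?_⟩
  simpa [ht' x hx] using (hT _ (Finset.mem_image_of_mem t hx)).trans_lt hT'

lemma pairwise_append_cons {β : Type*} {R : β → β → Prop} {A B : List β} {v : β}
    (h : (A ++ B).Pairwise R) (hA : ∀ x ∈ A, R x v) (hB : ∀ y ∈ B, R v y) :
    (A ++ v :: B).Pairwise R := by
  rw [List.pairwise_append] at h ⊢
  exact ⟨h.1, List.pairwise_cons.mpr ⟨hB, h.2.1⟩,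
    fun x hx => List.forall_mem_cons.mpr ⟨hA x hx, h.2.2 x hx⟩⟩

namespace ContourKeys

lemma congr [Preorder α] {c : List V} {t l r t' l' r' : V → α} (K : ContourKeys G S c t l r)
    (ht : ∀ x ∈ S, t' x = t x) (hl : ∀ x ∈ S, l' x = l x) (hr : ∀ x ∈ S, r' x = r x) :
    ContourKeys G S c t' l' r' where
  subset := K.subset
  left := K.left.imp_of_mem fun {x y} hx hy h => by
    rwa [hl x (K.subset x hx), hl y (K.subset y hy)]
  right := K.right.imp_of_mem fun {x y} hx hy h => by
    rwa [hr x (K.subset x hx), hr y (K.subset y hy)]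
  minimal w hw z hz := by
    rw [hl z hz, hr z hz, hl w (K.subset w hw), hr w (K.subset w hw)]
    exact K.minimal w hw z hz
  edge x hx y hy z hz := by
    rw [ht x hx, ht y hy, ht z hz, hl x hx, hl y hy, hl z hz, hr x hx, hr y hy, hr z hz]
    exact K.edge x hx y hy z hz

lemma reverse [Preorder α] {c : List V} {t l r : V → α} (K : ContourKeys G S c t l r) :
    ContourKeys G S c.reverse t r l where
  subset x hx := K.subset x (List.mem_reverse.mp hx)
  left := List.pairwise_reverse.mpr K.right
  right := List.pairwise_reverse.mpr K.left
  minimal w hw z hz hzw := (K.minimal w (List.mem_reverse.mp hw) z hz hzw).symm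
  edge x hx y hy z hz h hzx hzy := (K.edge x hx y hy z hz h hzx hzy).imp_right Or.symm

variable [LinearOrder α] {A B M : List V} {a b v : V} {t l r : V → α}

lemma lt_left_of_mem (K : ContourKeys G S (A ++ a :: M ++ b :: B) t l r) {x : V}
    (hx : x ∈ A ∨ x = a ∨ x ∈ M) : l b < l x :=
  (List.pairwise_append.mp K.left).2.2 x (by simpa using hx) b List.mem_cons_self

lemma left_le_of_mem (K : ContourKeys G S (A ++ a :: M ++ b :: B) t l r) {y : V}
    (hy : y ∈ b :: B) : l y ≤ l b := by
  have h := (List.pairwise_append.mp K.left).2.1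
  rcases List.mem_cons.mp hy with rfl | hy
  · exact le_rfl
  · exact (List.rel_of_pairwise_cons h hy).le

lemma left_insert (K : ContourKeys G S (A ++ a :: M ++ b :: B) t l r) (hl : IsJustAbove l S b v) :
    (A ++ a :: v :: b :: B).Pairwise (fun x y => l y < l x) := by
  suffices ((A ++ [a]) ++ v :: (b :: B)).Pairwise (fun x y => l y < l x) by simpa using this
  refine pairwise_append_cons (K.left.sublist (by simp)) (fun x hx => ?_)
    fun y hy => (K.left_le_of_mem hy).trans_lt hl.1
  have hx' : x ∈ A ∨ x = a := by simpa using hx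
  exact hl.2 x (K.subset x (by grind)) (K.lt_left_of_mem (by tauto))

lemma reverse_block (K : ContourKeys G S (A ++ a :: M ++ b :: B) t l r) :
    ContourKeys G S (B.reverse ++ b :: M.reverse ++ a :: A.reverse) t r l := by
  simpa using K.reverse

lemma right_insert (K : ContourKeys G S (A ++ a :: M ++ b :: B) t l r)
    (hr : IsJustAbove r S a v) : (A ++ a :: v :: b :: B).Pairwise (fun x y => r x < r y) := by
  simpa using List.pairwise_reverse.mpr (K.reverse_block.left_insert hr)

lemma left_le_of_mem_block (K : ContourKeys G S (A ++ a :: M ++ b :: B) t l r) {w : V}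
    (hw : w ∈ a :: M ++ [b]) : l b ≤ l w := by
  have hw' : (w = a ∨ w ∈ M) ∨ w = b := by simpa [or_assoc] using hw
  rcases hw' with h | rfl
  · exact (K.lt_left_of_mem (Or.inr h)).le
  · exact le_rfl

lemma lt_of_mem_block (K : ContourKeys G S (A ++ a :: M ++ b :: B) t l r)
    (hl : IsJustAbove l S b v) (hr : IsJustAbove r S a v) {w z : V} (hw : w ∈ a :: M ++ [b])
    (hz : z ∈ S) (hzw : z ≠ w) : (l w < l z ∧ l v < l z) ∨ (r w < r z ∧ r v < r z) := by
  have hbw : l b ≤ l w := K.left_le_of_mem_block hw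
  have haw : r a ≤ r w := K.reverse_block.left_le_of_mem_block (by grind)
  have hwc : w ∈ A ++ a :: M ++ b :: B := by grind
  exact (K.minimal w hwc z hz hzw).imp
    (fun h => ⟨h, hl.2 z hz (hbw.trans_lt h)⟩) (fun h => ⟨h, hr.2 z hz (haw.trans_lt h)⟩)

lemma minimal_insert [DecidableEq V] (K : ContourKeys G S (A ++ a :: M ++ b :: B) t l r)
    (hl : IsJustAbove l S b v) (hr : IsJustAbove r S a v) {w z : V}
    (hw : w ∈ A ++ a :: v :: b :: B) (hz : z ∈ insert v S) (hzw : z ≠ w) :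
    l w < l z ∨ r w < r z := by
  have hw' : (w ∈ A ∨ w = a) ∨ w = v ∨ w ∈ b :: B := by simpa [or_assoc] using hw
  rcases Finset.mem_insert.mp hz with rfl | hzS <;> rcases hw' with hwa | rfl | hwb
  · have hra : r w ≤ r a := K.reverse_block.left_le_of_mem (by grind)
    exact Or.inr (hra.trans_lt hr.1)
  · exact absurd rfl hzw
  · exact Or.inl ((K.left_le_of_mem hwb).trans_lt hl.1)
  · exact K.minimal w (by grind) z hzS hzw
  · by_cases hza : z = a
    · exact Or.inl (hl.2 z hzS (K.lt_left_of_mem (Or.inr (Or.inl hza))))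
    · exact (K.lt_of_mem_block hl hr List.mem_cons_self hzS hza).imp And.right And.right
  · exact K.minimal w (List.mem_append_right _ hwb) z hzS hzw

lemma edge_insert [DecidableEq V] (K : ContourKeys G S (A ++ a :: M ++ b :: B) t l r)
    (hN : ∀ w ∈ S, G.Adj v w → w ∈ a :: M ++ [b]) (ht : ∀ x ∈ S, t x < t v)
    (hl : IsJustAbove l S b v) (hr : IsJustAbove r S a v) {x y z : V} (hx : x ∈ insert v S)
    (hy : y ∈ insert v S) (hz : z ∈ insert v S) (hxy : G.Adj x y) (hzx : z ≠ x) (hzy : z ≠ y) :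
    (t x < t z ∧ t y < t z) ∨ (l x < l z ∧ l y < l z) ∨ (r x < r z ∧ r y < r z) := by
  have new : ∀ w ∈ S, G.Adj v w → z ∈ S → z ≠ w →
      (l v < l z ∧ l w < l z) ∨ (r v < r z ∧ r w < r z) := fun w hw hvw hzS hzw =>
    (K.lt_of_mem_block hl hr (hN w hw hvw) hzS hzw).imp And.symm And.symm
  rcases Finset.mem_insert.mp hz with rfl | hzS
  · exact Or.inl ⟨ht x (by grind), ht y (by grind)⟩
  rcases Finset.mem_insert.mp hx with rfl | hxS <;> rcases Finset.mem_insert.mp hy with rfl | hyS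
  · exact absurd rfl hxy.ne
  · exact Or.inr (new y hyS hxy hzS hzy)
  · exact Or.inr ((new x hxS hxy.symm hzS hzx).imp And.symm And.symm)
  · exact K.edge x hxS y hyS z hzS hxy hzx hzy

lemma insert [DecidableEq V] (K : ContourKeys G S (A ++ a :: M ++ b :: B) t l r)
    (hN : ∀ w ∈ S, G.Adj v w → w ∈ a :: M ++ [b]) (ht : ∀ x ∈ S, t x < t v)
    (hl : IsJustAbove l S b v) (hr : IsJustAbove r S a v) :
    ContourKeys G (insert v S) (A ++ a :: v :: b :: B) t l r where
  subset x hx := by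
    have hxS := K.subset x
    grind
  left := K.left_insert hl
  right := K.right_insert hr
  minimal _ hw _ hz hzw := K.minimal_insert hl hr hw hz hzw
  edge _ hx _ hy _ hz hxy hzx hzy := K.edge_insert hN ht hl hr hx hy hz hxy hzx hzy

end ContourKeys

lemma CanonicalOrder.exists_contourKeys [DecidableEq V] [LinearOrder α] [DenselyOrdered α]
    [NoMinOrder α] [NoMaxOrder α] [Nonempty α] {c : List V} (h : CanonicalOrder G S c) :
    ∃ t l r : V → α, ContourKeys G S c t l r := by
  induction h with
  | base s t hst =>
    obtain ⟨x⟩ := ‹Nonempty α›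
    obtain ⟨y, hxy⟩ := exists_gt x
    refine ⟨fun _ => x, fun v => if v = s then y else x, fun v => if v = s then x else y, ?_⟩
    constructor
    case edge =>
      intro p hp q hq z hz hpq hzp hzq
      have := hpq.ne
      simp only [Finset.mem_insert, Finset.mem_singleton] at hp hq hz
      grind
    all_goals simp [hst, hst.symm, hxy]
  | step S A B M a b v _ hv hN ih =>
    obtain ⟨t, l, r, K⟩ := ih
    obtain ⟨t', ht', ht⟩ := exists_forall_key_lt t hv
    obtain ⟨l', hl', hl⟩ := exists_isJustAbove l hv (K.subset b (by simp))
    obtain ⟨r', hr', hr⟩ := exists_isJustAbove r hv (K.subset a (by simp))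
    exact ⟨t', l', r', (K.congr ht' hl' hr').insert hN ht hl hr⟩

lemma CanonicalOrder.exists_isRealizer [Fintype V] [DecidableEq V] [LinearOrder α]
    [DenselyOrdered α] [NoMinOrder α] [NoMaxOrder α] [Nonempty α] {c : List V}
    (h : CanonicalOrder G Finset.univ c) : ∃ κ : Fin 3 → V → α, IsRealizer G κ := by
  obtain ⟨t, l, r, K⟩ := h.exists_contourKeys (α := α)
  refine ⟨![t, l, r], fun a b c hab hca hcb => ?_⟩
  rw [Fin.exists_fin_succ, Fin.exists_fin_two]
  exact K.edge a (by simp) b (by simp) c (by simp) hab hca hcb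

end CanonicalOrder

/-! ### Links of vertices in systems of triangles -/

section TripleChain

variable {V : Type*} {R R' : V → V → V → Prop} {Q : V → V → Prop} {l : List V} {p s : V}

/-- `TripleChain R p l s` says that `R q x t` holds for every entry `x` of the list `l` with
predecessor `q` and successor `t`, where the first entry has predecessor `p` and the last one has
successor `s`. It expresses local conditions along a closed contour. -/
def TripleChain (R : V → V → V → Prop) : V → List V → V → Prop
  | _, [], _ => True
  | p, x :: l, s => R p x (l.headD s) ∧ TripleChain R x l s

lemma tripleChain_append (l₁ l₂ : List V) :
    TripleChain R p (l₁ ++ l₂) s ↔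
      TripleChain R p l₁ (l₂.headD s) ∧ TripleChain R (l₁.getLastD p) l₂ s := by
  induction l₁ generalizing p with
  | nil => simp [TripleChain]
  | cons x l ih =>
    simp only [List.cons_append, TripleChain, ih, and_assoc, List.getLastD_cons]
    cases l <;> simp

lemma TripleChain.mono (h : TripleChain R p l s) (hR : ∀ x ∈ l, ∀ p s, R p x s → R' p x s) :
    TripleChain R' p l s := by
  induction l generalizing p with
  | nil => trivial
  | cons x l ih =>
    exact ⟨hR x List.mem_cons_self _ _ h.1, ih h.2 fun y hy => hR y (List.mem_cons_of_mem x hy)⟩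

lemma TripleChain.exists_of_mem (h : TripleChain R p l s) {x : V} (hx : x ∈ l) :
    ∃ q t, R q x t := by
  induction l generalizing p with
  | nil => exact absurd hx List.not_mem_nil
  | cons y l ih =>
    rcases List.mem_cons.mp hx with rfl | hx
    · exact ⟨_, _, h.1⟩
    · exact ih h.2 hx

lemma TripleChain.isChain (h : TripleChain R p l s) (hR : ∀ p x s, R p x s → Q p x) :
    (p :: l).IsChain Q := by
  induction l generalizing p with
  | nil => exact List.isChain_singleton p
  | cons y l ih => exact List.isChain_cons_cons.mpr ⟨hR _ _ _ h.1, ih h.2⟩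

lemma rel_headD_of_isChain (h : (p :: l ++ [s]).IsChain Q) : Q p (l.headD s) := by
  cases l with
  | nil => exact h.rel
  | cons x l => exact h.rel

lemma rel_getLastD_of_isChain (h : (p :: l ++ [s]).IsChain Q) : Q (l.getLastD p) s := by
  induction l generalizing p with
  | nil => exact h.rel
  | cons x l ih => simpa only [List.getLastD_cons] using ih h.tail

lemma tripleChain_of_isChain (h : (p :: l ++ [s]).IsChain Q)
    (hR : ∀ x ∈ l, ∀ q t, Q q x → Q x t → R q x t) : TripleChain R p l s := by
  induction l generalizing p with
  | nil => trivial
  | cons x l ih =>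
    exact ⟨hR x List.mem_cons_self _ _ h.rel (rel_headD_of_isChain h.tail),
      ih h.tail fun y hy => hR y (List.mem_cons_of_mem x hy)⟩

lemma exists_eq_cons_concat (hp : l.head? = some p) (hs : l.getLast? = some s) (hps : p ≠ s) :
    ∃ m, l = p :: m ++ [s] := by
  obtain ⟨k, rfl⟩ := List.getLast?_eq_some_iff.mp hs
  cases k with
  | nil => exact absurd (by simpa using hp) hps.symm
  | cons q m => exact ⟨m, by simpa using hp⟩

end TripleChain

section Link

variable {V : Type*} {G : SimpleGraph V} {T : V → V → V → Prop} {S : Finset V}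

/-- A system of positively oriented triangles of `G`, at most one to the left of each dart. -/
structure IsTriangleSystem (G : SimpleGraph V) (T : V → V → V → Prop) : Prop where
  rot : ∀ {x y z}, T x y z → T y z x
  adj : ∀ {x y z}, T x y z → G.Adj x y
  unique : ∀ {x y z w}, T x y z → T x y w → z = w

lemma IsTriangleSystem.rot' (hT : IsTriangleSystem G T) {x y z : V} (h : T x y z) : T z x y :=
  hT.rot (hT.rot h)

lemma IsTriangleSystem.unique_mid (hT : IsTriangleSystem G T) {x y z w : V} (h : T x y z)
    (h' : T x w z) : y = w :=
  hT.unique (hT.rot' h) (hT.rot' h')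

/-- A fan at `x`: the elements of `N` are listed without repetition by `ℓ`, and consecutive ones
span a triangle with `x`. -/
structure IsFan (T : V → V → V → Prop) (x : V) (N : Set V) (ℓ : List V) : Prop where
  nodup : ℓ.Nodup
  mem_iff : ∀ y, y ∈ ℓ ↔ y ∈ N
  isChain : ℓ.IsChain (T x)

lemma IsFan.of_append_singleton {x v : V} {N : Set V} {m : List V} (h : IsFan T x N (m ++ [v])) :
    IsFan T x {y | y ∈ N ∧ y ≠ v} m := by
  obtain ⟨hnd, -, hv⟩ := List.nodup_append.mp h.nodup
  refine ⟨hnd, fun y => ?_, (List.isChain_append.mp h.isChain).1⟩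
  have hyv : y ∈ m → y ≠ v := fun hy => hv y hy v (List.mem_singleton_self v)
  rw [Set.mem_ofPred_eq, ← h.mem_iff, List.mem_append, List.mem_singleton]
  tauto

/-- The link of `x` inside `S` is a path from `p` to `s`, as at a boundary vertex of a triangulated
disk. -/
def LinkPath (G : SimpleGraph V) (T : V → V → V → Prop) (S : Finset V) (p x s : V) : Prop :=
  ∃ ℓ, IsFan T x {y | G.Adj x y ∧ y ∈ S} ℓ ∧ ℓ.head? = some p ∧ ℓ.getLast? = some s ∧ ¬ T x s p

/-- The link of `x` is a cycle, as at an interior vertex of a triangulated disk; the cycle is cut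
open at each of its vertices `v`. -/
def LinkCycle (G : SimpleGraph V) (T : V → V → V → Prop) (x : V) : Prop :=
  ∀ v, G.Adj x v → ∃ ℓ, IsFan T x {y | G.Adj x y ∧ y ≠ v} ℓ ∧
    (∃ h, ℓ.head? = some h ∧ T x v h) ∧ ∃ t, ℓ.getLast? = some t ∧ T x t v

namespace LinkPath

variable {p x s v m y z : V}

lemma adj_pred (h : LinkPath G T S p x s) : G.Adj x p ∧ p ∈ S := by
  obtain ⟨ℓ, hfan, hp, -⟩ := h
  exact (hfan.mem_iff p).mp (List.mem_of_mem_head? hp)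

lemma eq_of_pred_eq_succ (h : LinkPath G T S p x p) (hy : G.Adj x y) (hyS : y ∈ S) : y = p := by
  obtain ⟨ℓ, hfan, hp, hs, -⟩ := h
  have hyℓ : y ∈ ℓ := (hfan.mem_iff y).mpr ⟨hy, hyS⟩
  have hnd := hfan.nodup
  obtain ⟨k, rfl⟩ := List.getLast?_eq_some_iff.mp hs
  cases k with
  | nil => simpa using hyℓ
  | cons q k => simp_all

lemma not_triangle_pred (hT : IsTriangleSystem G T) (h : LinkPath G T S p x s) (hz : z ∈ S) :
    ¬ T p x z := by
  intro hpxz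
  obtain ⟨ℓ, hfan, hp, hs, hn⟩ := h
  have hxzp : T x z p := hT.rot hpxz
  obtain ⟨A, B, rfl⟩ := List.append_of_mem ((hfan.mem_iff z).mpr ⟨hT.adj hxzp, hz⟩)
  cases B with
  | nil =>
    obtain rfl : z = s := by simpa using hs
    exact hn hxzp
  | cons y B =>
    have hxzy : T x z y := (List.isChain_append.mp hfan.isChain).2.1.rel
    obtain rfl := hT.unique hxzp hxzy
    have hnd := hfan.nodup
    cases A <;> simp_all

lemma erase_of_not_adj [DecidableEq V] (h : LinkPath G T S p x s) (hv : ¬ G.Adj x v) :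
    LinkPath G T (S.erase v) p x s := by
  obtain ⟨ℓ, hfan, h⟩ := h
  refine ⟨ℓ, ⟨hfan.nodup, fun y => (hfan.mem_iff y).trans ?_, hfan.isChain⟩, h⟩
  simp only [Set.mem_ofPred_eq, Finset.mem_erase]
  exact and_congr_right fun hy => (and_iff_right fun (e : y = v) => hv (e ▸ hy)).symm

lemma erase_pred [DecidableEq V] (hT : IsTriangleSystem G T) (h : LinkPath G T S v x s)
    (hm : T x v m) (hmS : m ∈ S) : LinkPath G T (S.erase v) m x s := by
  have hxm : G.Adj x m := (hT.adj (hT.rot' hm)).symm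
  have hmv : m ≠ v := (hT.adj (hT.rot hm)).ne'
  have hsv : s ≠ v := fun e => hmv ((e ▸ h).eq_of_pred_eq_succ hxm hmS)
  obtain ⟨ℓ, hfan, hp, hs, -⟩ := h
  obtain ⟨k, rfl⟩ := exists_eq_cons_concat hp hs hsv.symm
  obtain ⟨hvk, hnd⟩ := List.nodup_cons.mp hfan.nodup
  obtain rfl := hT.unique (rel_headD_of_isChain hfan.isChain) hm
  refine ⟨k ++ [s], ⟨hnd, fun y => ?_, hfan.isChain.tail⟩, by cases k <;> rfl, by simp,
    fun hb => hsv (hT.unique_mid hb hm)⟩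
  have hy := hfan.mem_iff y
  have hyv : y ∈ k ++ [s] → y ≠ v := fun hy e => hvk (e ▸ hy)
  simp only [Set.mem_ofPred_eq, Finset.mem_erase, List.cons_append, List.mem_cons] at hy ⊢
  tauto

lemma erase_succ [DecidableEq V] (hT : IsTriangleSystem G T) (h : LinkPath G T S p x v)
    (hm : T x m v) (hmS : m ∈ S) : LinkPath G T (S.erase v) p x m := by
  have hmv : m ≠ v := (hT.adj (hT.rot hm)).ne
  have hpv : p ≠ v := fun e => hmv ((e ▸ h).eq_of_pred_eq_succ (hT.adj hm) hmS)
  obtain ⟨ℓ, hfan, hp, hs, -⟩ := h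
  obtain ⟨k, rfl⟩ := exists_eq_cons_concat hp hs hpv
  obtain ⟨hnd, -, hvk⟩ := List.nodup_append.mp hfan.nodup
  obtain rfl := hT.unique_mid (rel_getLastD_of_isChain hfan.isChain) hm
  refine ⟨p :: k, ⟨hnd, fun y => ?_, (List.isChain_append.mp hfan.isChain).1⟩, rfl,
    by simp [List.getLast?_cons, List.getLastD_eq_getLast?], fun hb => hpv (hT.unique hb hm)⟩
  have hy := hfan.mem_iff y
  have hyv : y ∈ p :: k → y ≠ v := fun hy => hvk y hy v (List.mem_singleton_self v)
  simp only [Set.mem_ofPred_eq, Finset.mem_erase, List.mem_append, List.mem_singleton] at hy ⊢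
  tauto

end LinkPath

lemma LinkCycle.linkPath_erase [DecidableEq V] (hT : IsTriangleSystem G T) {x v p s : V}
    (h : LinkCycle G T x) (hS : ∀ y, G.Adj x y → y ∈ S) (hp : T v p x) (hs : T v x s) :
    LinkPath G T (S.erase v) p x s := by
  obtain ⟨ℓ, hfan, ⟨q, hq, hxvq⟩, t, ht, hxtv⟩ := h v (hT.adj hs).symm
  obtain rfl := hT.unique hxvq (hT.rot' hp)
  obtain rfl := hT.unique (hT.rot' hxtv) hs
  refine ⟨ℓ, ⟨hfan.nodup, fun y => (hfan.mem_iff y).trans ?_, hfan.isChain⟩, hq, ht, fun hn => ?_⟩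
  · have := hS y
    simp only [Set.mem_ofPred_eq, Finset.mem_erase]
    tauto
  · exact (hT.adj hp).ne (hT.unique hn hxtv).symm

end Link

/-! ### Mod 2 homology -/

section Filling

variable {V : Type*} {G : SimpleGraph V} {T : V → V → V → Prop} {S : Finset V}
  {Z g : V → V → ZMod 2}

/-- A mod 2 cycle of the graph `G[S]`, as a symmetric function on pairs of vertices. -/
structure IsModTwoCycle [Fintype V] (G : SimpleGraph V) (S : Finset V) (Z : V → V → ZMod 2) :
    Prop where
  symm : ∀ x y, Z x y = Z y x
  supp : ∀ x y, Z x y ≠ 0 → G.Adj x y ∧ x ∈ S ∧ y ∈ S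
  sum_eq_zero : ∀ x, ∑ y, Z x y = 0

/-- A set of triangles of `T` inside `S` with mod 2 boundary `Z`. It is encoded by the function `g`
that takes the value `1` on the darts having a triangle of the set to their left. -/
structure IsFilling (T : V → V → V → Prop) (S : Finset V) (Z g : V → V → ZMod 2) : Prop where
  add_swap : ∀ x y, g x y + g y x = Z x y
  rot : ∀ {x y z}, T x y z → g x y = g y z
  exists_triangle : ∀ {x y}, g x y ≠ 0 → ∃ z, T x y z ∧ x ∈ S ∧ y ∈ S ∧ z ∈ S

/-- Every mod 2 cycle of `G[S]` bounds, i.e. the triangles of `T` inside `S` kill the first mod 2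
homology of `G[S]`. -/
def CyclesBound [Fintype V] (G : SimpleGraph V) (T : V → V → V → Prop) (S : Finset V) : Prop :=
  ∀ Z, IsModTwoCycle G S Z → ∃ g, IsFilling T S Z g

lemma IsFilling.eq_of_triangle (hT : IsTriangleSystem G T) (hg : IsFilling T S Z g) {u y z : V}
    (h : T u y z) (hZ : Z u z = 0) : g u z = g u y := by
  have huz : g u z = g z u := CharTwo.add_eq_zero.mp ((hg.add_swap u z).trans hZ)
  rw [huz, hg.rot h, hg.rot (hT.rot h)]

lemma IsFilling.eq_of_isChain (hT : IsTriangleSystem G T) (hg : IsFilling T S Z g) {u p : V}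
    {ℓ : List V} (hℓ : (p :: ℓ).IsChain (T u)) (hZ : ∀ y ∈ ℓ, Z u y = 0) :
    ∀ y ∈ ℓ, g u y = g u p := by
  induction ℓ generalizing p with
  | nil => simp
  | cons q ℓ ih =>
    have hq : g u q = g u p := hg.eq_of_triangle hT hℓ.rel (hZ q List.mem_cons_self)
    refine List.forall_mem_cons.mpr ⟨hq, fun y hy => ?_⟩
    exact (ih hℓ.tail (fun y hy => hZ y (List.mem_cons_of_mem q hy)) y hy).trans hq

namespace LinkPath

variable {p u s y : V}

lemma filling_pred (hT : IsTriangleSystem G T) (h : LinkPath G T S p u s)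
    (hg : IsFilling T S Z g) : g u p = Z u p := by
  have hpu : g p u = 0 := by
    by_contra hne
    obtain ⟨z, hz, -, -, hzS⟩ := hg.exists_triangle hne
    exact h.not_triangle_pred hT hzS hz
  rw [← hg.add_swap, hpu, add_zero]

lemma filling_eq_zero (hT : IsTriangleSystem G T) (h : LinkPath G T S p u s)
    (hg : IsFilling T S Z g) (hZ : ∀ y, Z u y = 0) (y : V) : g u y = 0 := by
  have hup : g u p = 0 := (h.filling_pred hT hg).trans (hZ p)
  obtain ⟨ℓ, hfan, hp, -⟩ := h
  obtain ⟨k, rfl⟩ := List.head?_eq_some_iff.mp hp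
  by_contra hne
  obtain ⟨z, hz, -, hyS, -⟩ := hg.exists_triangle hne
  rcases List.mem_cons.mp ((hfan.mem_iff y).mpr ⟨hT.adj hz, hyS⟩) with rfl | hy
  · exact hne hup
  · exact hne ((hg.eq_of_isChain hT hfan.isChain (fun y _ => hZ y) y hy).trans hup)

lemma filling_eq (hT : IsTriangleSystem G T) (h : LinkPath G T S p u s) (hg : IsFilling T S Z g)
    (hps : p ≠ s) (hZ : ∀ y, y ≠ p → y ≠ s → Z u y = 0) (hy : G.Adj u y) (hyS : y ∈ S)
    (hys : y ≠ s) : g u y = Z u p := by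
  have hup := h.filling_pred hT hg
  obtain ⟨ℓ, hfan, hp, hs, -⟩ := h
  obtain ⟨k, rfl⟩ := exists_eq_cons_concat hp hs hps
  have hyℓ : y = p ∨ y ∈ k := by simpa [hys] using (hfan.mem_iff y).mpr ⟨hy, hyS⟩
  rcases hyℓ with rfl | hyk
  · exact hup
  · have hnd : ∀ z ∈ k, z ≠ p ∧ z ≠ s := by
      have := hfan.nodup
      grind
    exact (hg.eq_of_isChain hT (List.isChain_append.mp hfan.isChain).1
      (fun z hz => hZ z (hnd z hz).1 (hnd z hz).2) y hyk).trans hup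

end LinkPath

lemma CyclesBound.erase [Fintype V] [DecidableEq V] (hT : IsTriangleSystem G T)
    (h : CyclesBound G T S) {p v s : V} (hv : LinkPath G T S p v s) :
    CyclesBound G T (S.erase v) := by
  intro Z hZ
  obtain ⟨g, hg⟩ := h Z ⟨hZ.symm, fun x y hxy => (hZ.supp x y hxy).imp_right fun hS =>
    ⟨Finset.mem_of_mem_erase hS.1, Finset.mem_of_mem_erase hS.2⟩, hZ.sum_eq_zero⟩
  have hZv : ∀ y, Z v y = 0 := fun y => by
    by_contra hne
    exact Finset.notMem_erase v S (hZ.supp v y hne).2.1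
  have hgv : ∀ y, g v y = 0 := hv.filling_eq_zero hT hg hZv
  have hgv' : ∀ y, g y v = 0 := fun y => by
    simpa [hgv, hZv] using hg.add_swap v y
  refine ⟨g, hg.add_swap, hg.rot, fun {x y} hxy => ?_⟩
  obtain ⟨z, hz, hx, hy, hzS⟩ := hg.exists_triangle hxy
  refine ⟨z, hz, Finset.mem_erase.mpr ⟨?_, hx⟩, Finset.mem_erase.mpr ⟨?_, hy⟩,
    Finset.mem_erase.mpr ⟨?_, hzS⟩⟩
  · rintro rfl; exact hxy (hgv _)
  · rintro rfl; exact hxy (hgv' _)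
  · rintro rfl; exact hxy ((hg.rot hz).trans (hgv' _))

end Filling

section PathIndicator

variable {V : Type*} [DecidableEq V]

/-- The mod 2 indicator of the edge `ab`. -/
def edgeInd (a b : V) : V → V → ZMod 2 :=
  fun p q => if (p = a ∧ q = b) ∨ (p = b ∧ q = a) then 1 else 0

/-- The mod 2 edge indicator of the path through the entries of a list. -/
def pathInd : List V → V → V → ZMod 2
  | a :: b :: l => edgeInd a b + pathInd (b :: l)
  | _ => 0

lemma edgeInd_symm (a b p q : V) : edgeInd a b p q = edgeInd a b q p := by
  unfold edgeInd
  congr 1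
  simp only [eq_iff_iff]
  tauto

lemma eq_or_eq_of_edgeInd_ne_zero {a b p q : V} (h : edgeInd a b p q ≠ 0) :
    (p = a ∧ q = b) ∨ (p = b ∧ q = a) := by
  by_contra hn
  exact h (if_neg hn)

lemma sum_edgeInd [Fintype V] {a b : V} (hab : a ≠ b) (p : V) :
    ∑ q, edgeInd a b p q = (if p = a then 1 else 0) + if p = b then 1 else 0 := by
  unfold edgeInd
  by_cases ha : p = a
  · subst ha
    simp [hab]
  · by_cases hb : p = b
    · subst hb
      simp [hab.symm]
    · simp [ha, hb]

lemma pathInd_symm (l : List V) (p q : V) : pathInd l p q = pathInd l q p := by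
  fun_induction pathInd l with
  | case1 a b l ih => simp only [Pi.add_apply, ih, edgeInd_symm a b p q]
  | case2 => rfl

lemma rel_of_pathInd_ne_zero {l : List V} {p q : V} {Q : V → V → Prop}
    (hQ : ∀ x y, Q x y → Q y x) (hl : l.IsChain Q) (h : pathInd l p q ≠ 0) :
    Q p q ∧ p ∈ l ∧ q ∈ l := by
  fun_induction pathInd l with
  | case1 a b l ih =>
    by_cases he : edgeInd a b p q = 0
    · rw [Pi.add_apply, Pi.add_apply, he, zero_add] at h
      exact (ih hl.tail h).imp_right (And.imp (List.mem_cons_of_mem a) (List.mem_cons_of_mem a))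
    · rcases eq_or_eq_of_edgeInd_ne_zero he with ⟨rfl, rfl⟩ | ⟨rfl, rfl⟩
      · exact ⟨hl.rel, by simp⟩
      · exact ⟨hQ _ _ hl.rel, by simp⟩
  | case2 => exact absurd rfl h

lemma pathInd_eq_zero_of_notMem {l : List V} {p : V} (h : p ∉ l) (q : V) : pathInd l p q = 0 := by
  by_contra hne
  exact h (rel_of_pathInd_ne_zero (Q := fun _ _ => True) (by simp)
    (List.pairwise_of_forall fun _ _ => trivial).isChain hne).2.1

lemma sum_pathInd [Fintype V] {l : List V} {a b : V} (hl : (a :: l ++ [b]).IsChain (· ≠ ·))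
    (p : V) : ∑ q, pathInd (a :: l ++ [b]) p q =
      (if p = a then 1 else 0) + if p = b then 1 else 0 := by
  induction l generalizing a with
  | nil => simpa [pathInd] using sum_edgeInd hl.rel p
  | cons c l ih =>
    have hcc : (if p = c then (1 : ZMod 2) else 0) + (if p = c then 1 else 0) = 0 :=
      CharTwo.add_self_eq_zero _
    simp only [List.cons_append] at hl ih ⊢
    simp only [pathInd, Pi.add_apply, Finset.sum_add_distrib, ih hl.tail, sum_edgeInd hl.rel]
    linear_combination hcc

lemma isModTwoCycle_pathInd [Fintype V] {G : SimpleGraph V} {S : Finset V} {a : V} {l : List V}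
    (hl : (a :: l ++ [a]).IsChain G.Adj) (hS : ∀ z ∈ a :: l ++ [a], z ∈ S) :
    IsModTwoCycle G S (pathInd (a :: l ++ [a])) where
  symm := pathInd_symm _
  supp p q h := (rel_of_pathInd_ne_zero (fun _ _ h => h.symm) hl h).imp_right
    (And.imp (hS p) (hS q))
  sum_eq_zero p := by
    rw [sum_pathInd (hl.imp fun _ _ h => h.ne)]
    exact CharTwo.add_self_eq_zero _

lemma pathInd_cons_cons_of_ne {y x v : V} {l : List V} (hvy : v ≠ y) (hvx : v ≠ x) (q : V) :
    pathInd (y :: x :: l) v q = pathInd (x :: l) v q := by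
  simp [pathInd, edgeInd, hvy, hvx]

lemma pathInd_triple_of_notMem {x v s : V} {l : List V} (hl : v ∉ s :: l) (q : V) :
    pathInd (x :: v :: s :: l) v q = edgeInd x v v q + edgeInd v s v q := by
  simp only [pathInd.eq_1 x, pathInd.eq_1 v, Pi.add_apply, pathInd_eq_zero_of_notMem hl, add_zero]

end PathIndicator

namespace IsFan

variable {V : Type*} {G : SimpleGraph V} {T : V → V → V → Prop} {S : Finset V}
  {A B M : List V} {a b v w x : V}

lemma notMem_contour (hfan : IsFan T v {w | G.Adj v w ∧ w ∈ S} (a :: M ++ [b]))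
    (hv : ∀ w, w ∈ A ∨ w ∈ B → ¬ G.Adj v w) (hw : w ∈ M) : w ∉ A ++ a :: v :: b :: B := by
  have hnd := hfan.nodup
  have hvw : G.Adj v w := ((hfan.mem_iff w).mp (by simp [hw])).1
  have hwv : w ≠ v := hvw.ne'
  have hwAB := hv w
  grind

lemma mem_erase_contour_iff (hfan : IsFan T v {w | G.Adj v w ∧ w ∈ S} (a :: M ++ [b]))
    (hnd : (A ++ a :: v :: b :: B).Nodup) (x : V) :
    x ∈ A ++ a :: M ++ b :: B ↔ (x ∈ A ++ a :: v :: b :: B ∧ x ≠ v) ∨ x ∈ M := by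
  have hvM : v ∉ M := fun hvM => G.loopless.irrefl v ((hfan.mem_iff v).mp (by simp [hvM])).1
  grind

lemma nodup_erase_contour (hfan : IsFan T v {w | G.Adj v w ∧ w ∈ S} (a :: M ++ [b]))
    (hv : ∀ w, w ∈ A ∨ w ∈ B → ¬ G.Adj v w) (hnd : (A ++ a :: v :: b :: B).Nodup) :
    (A ++ a :: M ++ b :: B).Nodup := by
  have hndM := hfan.nodup
  have hM := fun w => hfan.notMem_contour hv (w := w)
  grind

end IsFan

/-! ### Triangulated disks -/

section Disk

variable {V : Type*} [Fintype V]

/-- A triangulated disk on the vertex set `S`, with boundary the contour `c` closed up by the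
edge joining its ends `o₁` and `o₂`. -/
structure IsDisk (G : SimpleGraph V) (T : V → V → V → Prop) (o₁ o₂ : V) (S : Finset V)
    (c : List V) : Prop where
  nodup : c.Nodup
  subset : ∀ x ∈ c, x ∈ S
  head : c.head? = some o₁
  last : c.getLast? = some o₂
  link : TripleChain (LinkPath G T S) o₂ c o₁
  interior : ∀ x ∈ S, x ∉ c → (∀ y, G.Adj x y → y ∈ S) ∧ LinkCycle G T x
  bounds : CyclesBound G T S
  conn : ∀ U : Finset V, U.Nonempty → (∀ x ∈ U, x ∈ S ∧ x ∉ c) →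
    ∃ x ∈ U, ∃ y ∈ S, y ∉ U ∧ G.Adj x y

namespace IsDisk

variable {G : SimpleGraph V} {T : V → V → V → Prop} {o₁ o₂ : V} {S : Finset V}
  {A B I M : List V} {a b v w x y : V}

lemma isChain_adj {c : List V} (h : IsDisk G T o₁ o₂ S c) : (o₂ :: c).IsChain G.Adj :=
  h.link.isChain fun _ _ _ hl => hl.adj_pred.1.symm

lemma isModTwoCycle_of_chord [DecidableEq V] (h : IsDisk G T o₁ o₂ S (A ++ x :: I ++ y :: B))
    (hxy : G.Adj x y) : IsModTwoCycle G S (pathInd (y :: x :: I ++ [y])) := by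
  refine isModTwoCycle_pathInd (List.isChain_cons_cons.mpr ⟨hxy.symm, ?_⟩) fun z hz => ?_
  · have hsplit : o₂ :: (A ++ x :: I ++ y :: B) = o₂ :: A ++ (x :: I ++ [y]) ++ B := by simp
    exact (hsplit ▸ h.isChain_adj).left_of_append.right_of_append
  · refine h.subset z ?_
    simp only [List.mem_append, List.mem_cons] at hz ⊢
    tauto

lemma link_mid (h : IsDisk G T o₁ o₂ S (A ++ x :: v :: I)) :
    LinkPath G T S x v (I.headD o₁) := by
  have hlink := h.link
  simp only [tripleChain_append, TripleChain] at hlink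
  exact hlink.2.2.1

/-- The chord and the part of the contour that it cuts off bound a set of triangles. This set has
triangles at `v`, all of them if `v` has no neighbour on that part, and none at `w`. -/
lemma not_adj_of_chord (hT : IsTriangleSystem G T)
    (h : IsDisk G T o₁ o₂ S (A ++ x :: v :: I ++ y :: B)) (hxy : G.Adj x y)
    (hw : w ∈ A ∨ w ∈ B) : ¬ G.Adj v w := by
  classical
  intro hvw
  obtain ⟨s, J, hsJ⟩ : ∃ s J, I ++ [y] = s :: J := by cases I <;> simp
  have hC : y :: x :: v :: I ++ [y] = y :: x :: v :: s :: J := by simp [← hsJ]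
  have hc : A ++ x :: v :: I ++ y :: B = A ++ x :: v :: s :: J ++ B := by simp [← hsJ]
  obtain ⟨g, hg⟩ := h.bounds _ (h.isModTwoCycle_of_chord hxy)
  rw [hC] at hg
  have hyJ : y ∈ s :: J := hsJ ▸ List.mem_append_right I (List.mem_singleton_self y)
  rw [hc] at h
  have hnd := h.nodup
  have hwC : w ∉ y :: x :: v :: s :: J := by grind
  have hwS : w ∈ S := h.subset w (by grind)
  obtain ⟨hvx, hxs, hvsJ⟩ : v ≠ x ∧ x ≠ s ∧ v ∉ s :: J := by grind
  have hvy : v ≠ y := fun e => hvsJ (e ▸ hyJ)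
  have hZv : ∀ q, pathInd (y :: x :: v :: s :: J) v q = edgeInd x v v q + edgeInd v s v q :=
    fun q => (pathInd_cons_cons_of_ne hvy hvx q).trans (pathInd_triple_of_notMem hvsJ q)
  have hgwv : g w v = 0 := by
    obtain ⟨q, t, hl⟩ := h.link.exists_of_mem (x := w) (by grind)
    exact hl.filling_eq_zero hT hg (pathInd_eq_zero_of_notMem hwC) v
  have hlink : LinkPath G T S x v s := by
    rw [List.append_assoc] at h
    exact h.link_mid
  have hvs : v ≠ s := List.ne_of_not_mem_cons hvsJ
  have hgvw : g v w = 1 := by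
    rw [hlink.filling_eq hT hg hxs (fun q hqx hqs => ?_) hvw hwS (by grind), hZv]
    · simp [edgeInd, hvx, hxs, hvx.symm]
    · simp [hZv, edgeInd, hqx, hqs, hvx, hvs]
  have hZ := hg.add_swap v w
  rw [hgvw, hgwv, pathInd_symm, pathInd_eq_zero_of_notMem hwC] at hZ
  exact one_ne_zero ((add_zero 1).symm.trans hZ)

/-- If the first vertex `v` of the part cut off by a chord has a chord itself, then that chord cuts
off a shorter part. -/
lemma exists_chordless (hT : IsTriangleSystem G T) {c : List V} (h : IsDisk G T o₁ o₂ S c)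
    (hc : c = A ++ x :: v :: I ++ y :: B) (hxy : G.Adj x y) :
    ∃ A a v b B, c = A ++ a :: v :: b :: B ∧ ∀ w, w ∈ A ∨ w ∈ B → ¬ G.Adj v w := by
  induction hn : I.length using Nat.strong_induction_on generalizing A I B x v y with
  | _ n ih =>
    have hch := fun w => (hc ▸ h).not_adj_of_chord hT (w := w) hxy
    cases I with
    | nil => exact ⟨A, x, v, y, B, by simpa using hc, hch⟩
    | cons i I =>
      by_cases hex : ∃ w ∈ I ++ [y], G.Adj v w
      · obtain ⟨w, hw, hvw⟩ := hex
        obtain ⟨I₁, I₂, hI⟩ := List.append_of_mem hw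
        have hlen : I₁.length < n := by
          have := congrArg List.length hI
          simp only [List.length_append, List.length_cons, List.length_nil] at this hn
          omega
        refine ih I₁.length hlen (A := A ++ [x]) (v := i) (B := I₂ ++ B) ?_ hvw rfl
        have hIB : I ++ y :: B = I₁ ++ w :: I₂ ++ B := by rw [← hI, List.append_assoc]; rfl
        simp only [hc, List.append_assoc, List.cons_append, List.nil_append] at hIB ⊢
        rw [hIB]
      · push Not at hex
        refine ⟨A, x, v, i, I ++ y :: B, by simp [hc], fun w hw => ?_⟩
        simp only [List.mem_append, List.mem_cons, List.not_mem_nil, or_false] at hw hex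
        rcases hw with hw | hw | rfl | hw
        · exact hch w (Or.inl hw)
        · exact hex w (Or.inl hw)
        · exact hex w (Or.inr rfl)
        · exact hch w (Or.inr hw)

lemma exists_isFan (h : IsDisk G T o₁ o₂ S (A ++ a :: v :: b :: B)) :
    ∃ M, IsFan T v {w | G.Adj v w ∧ w ∈ S} (a :: M ++ [b]) := by
  have hnd := h.nodup
  obtain ⟨ℓ, hfan, ha, hb, -⟩ := h.link_mid
  obtain ⟨M, rfl⟩ := exists_eq_cons_concat ha hb (by grind)
  exact ⟨M, hfan⟩

lemma link_erase_contour [DecidableEq V] (hT : IsTriangleSystem G T)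
    (h : IsDisk G T o₁ o₂ S (A ++ a :: v :: b :: B)) (hv : ∀ w, w ∈ A ∨ w ∈ B → ¬ G.Adj v w)
    (hfan : IsFan T v {w | G.Adj v w ∧ w ∈ S} (a :: M ++ [b])) :
    TripleChain (LinkPath G T (S.erase v)) o₂ (A ++ a :: M ++ b :: B) o₁ := by
  have hlink := h.link
  simp only [tripleChain_append, TripleChain, List.headD_cons] at hlink
  obtain ⟨hA, ha, -, hb, hB⟩ := hlink
  have hS : ∀ w ∈ a :: M ++ [b], w ∈ S := fun w hw => ((hfan.mem_iff w).mp hw).2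
  have hTa : T v a (M.headD b) := rel_headD_of_isChain hfan.isChain
  have hTb : T v (M.getLastD a) b := rel_getLastD_of_isChain hfan.isChain
  have hMid : TripleChain (LinkPath G T (S.erase v)) a M b :=
    tripleChain_of_isChain hfan.isChain fun x hx q t hqx hxt => by
      obtain ⟨hxS, hcyc⟩ := h.interior x (hS x (by simp [hx]))
        (hfan.notMem_contour hv hx)
      exact hcyc.linkPath_erase hT hxS hqx hxt
  have hhead : (M ++ b :: B).headD o₁ = M.headD b := by cases M <;> rfl
  simp only [List.append_assoc, List.cons_append, tripleChain_append, TripleChain,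
    List.headD_cons, hhead]
  refine ⟨hA.mono fun x hx p s hx' => hx'.erase_of_not_adj fun hxv => hv x (Or.inl hx) hxv.symm,
    ha.erase_succ hT (hT.rot hTa) (hS _ ?_), hMid, hb.erase_pred hT (hT.rot' hTb) (hS _ ?_),
    hB.mono fun x hx p s hx' => hx'.erase_of_not_adj fun hxv => hv x (Or.inr hx) hxv.symm⟩
  · cases M <;> simp
  · rw [List.getLastD_eq_getLast?]
    cases hM : M.getLast? with
    | none => simp
    | some m => simp [List.mem_of_getLast? hM]

lemma erase [DecidableEq V] (hT : IsTriangleSystem G T)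
    (h : IsDisk G T o₁ o₂ S (A ++ a :: v :: b :: B)) (hv : ∀ w, w ∈ A ∨ w ∈ B → ¬ G.Adj v w)
    (hfan : IsFan T v {w | G.Adj v w ∧ w ∈ S} (a :: M ++ [b])) :
    IsDisk G T o₁ o₂ (S.erase v) (A ++ a :: M ++ b :: B) where
  nodup := hfan.nodup_erase_contour hv h.nodup
  subset x hx := by
    rcases (hfan.mem_erase_contour_iff h.nodup x).mp hx with ⟨hxc, hxv⟩ | hxM
    · exact Finset.mem_erase.mpr ⟨hxv, h.subset x hxc⟩
    · obtain ⟨hvx, hxS⟩ := (hfan.mem_iff x).mp (by simp [hxM])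
      exact Finset.mem_erase.mpr ⟨hvx.ne', hxS⟩
  head := by
    have := h.head
    cases A <;> simpa using this
  last := by
    have := h.last
    simpa [List.getLast?_append, List.getLast?_cons] using this
  link := h.link_erase_contour hT hv hfan
  interior x hx hxc := by
    obtain ⟨hxv, hxS⟩ := Finset.mem_erase.mp hx
    have hmem := hfan.mem_erase_contour_iff h.nodup x
    obtain ⟨hadj, hcyc⟩ := h.interior x hxS fun hx' => hxc (hmem.mpr (Or.inl ⟨hx', hxv⟩))
    refine ⟨fun y hxy => Finset.mem_erase.mpr ⟨?_, hadj y hxy⟩, hcyc⟩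
    rintro rfl
    have := (hfan.mem_iff x).mpr ⟨hxy.symm, hxS⟩
    grind
  bounds := h.bounds.erase hT h.link_mid
  conn U hU hUS := by
    have hmem := hfan.mem_erase_contour_iff h.nodup
    obtain ⟨x, hx, y, hy, hyU, hxy⟩ := h.conn U hU fun x hx => by
      obtain ⟨hxS, hxc⟩ := hUS x hx
      obtain ⟨hxv, hxS⟩ := Finset.mem_erase.mp hxS
      exact ⟨hxS, fun hx' => hxc ((hmem x).mpr (Or.inl ⟨hx', hxv⟩))⟩
    refine ⟨x, hx, y, Finset.mem_erase.mpr ⟨?_, hy⟩, hyU, hxy⟩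
    rintro rfl
    obtain ⟨hxS, hxc⟩ := hUS x hx
    have := (hfan.mem_iff x).mpr ⟨hxy.symm, Finset.mem_of_mem_erase hxS⟩
    grind

lemma eq_pair [DecidableEq V] (h : IsDisk G T o₁ o₂ S [o₁, o₂]) : S = {o₁, o₂} := by
  have hsub : {o₁, o₂} ⊆ S := fun x hx => h.subset x (by simpa using hx)
  by_contra hne
  have hU : (S \ {o₁, o₂}).Nonempty :=
    Finset.sdiff_nonempty.mpr fun hS => hne (hS.antisymm hsub)
  obtain ⟨x, hx, y, hy, hyU, hxy⟩ := h.conn _ hU fun x hx => by simpa using hx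
  simp only [Finset.mem_sdiff, Finset.mem_insert, Finset.mem_singleton, not_and, not_not] at hx hyU
  obtain ⟨h₁, h₂, -⟩ := h.link
  rcases hyU hy with rfl | rfl
  · exact hx.2 (Or.inr (h₁.eq_of_pred_eq_succ hxy.symm hx.1))
  · exact hx.2 (Or.inl (h₂.eq_of_pred_eq_succ hxy.symm hx.1))

theorem canonicalOrder [DecidableEq V] (hT : IsTriangleSystem G T) (ho : o₁ ≠ o₂)
    {c : List V} (h : IsDisk G T o₁ o₂ S c) : CanonicalOrder G S c := by
  induction S using Finset.strongInduction generalizing c with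
  | _ S ih =>
    obtain ⟨m, rfl⟩ := exists_eq_cons_concat h.head h.last ho
    cases m with
    | nil =>
      obtain rfl := h.eq_pair
      exact CanonicalOrder.base o₁ o₂ ho
    | cons v I =>
      have hadj : G.Adj o₁ o₂ := h.link.1.adj_pred.1
      obtain ⟨A, a, v, b, B, hc, hv⟩ := h.exists_chordless hT (A := []) (B := []) rfl hadj
      rw [hc] at h ⊢
      obtain ⟨M, hfan⟩ := h.exists_isFan
      have hvS : v ∈ S := h.subset v (by simp)
      have hC := ih _ (Finset.erase_ssubset hvS) (h.erase hT hv hfan)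
      rw [← Finset.insert_erase hvS]
      exact CanonicalOrder.step _ A B M a b v hC (Finset.notMem_erase v S) fun w hw hvw =>
        (hfan.mem_iff w).mpr ⟨hvw, Finset.mem_of_mem_erase hw⟩

end IsDisk

end Disk

/-! ### Bounding cycles in triangle systems -/

section Bounding

variable {V : Type*} {G : SimpleGraph V} {T : V → V → V → Prop} {S : Finset V} {p : V}

lemma IsModTwoCycle.add [Fintype V] {Z Z' : V → V → ZMod 2} (h : IsModTwoCycle G S Z)
    (h' : IsModTwoCycle G S Z') : IsModTwoCycle G S (Z + Z') where
  symm x y := by simp only [Pi.add_apply, h.symm x y, h'.symm x y]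
  supp x y hxy := by
    by_cases h0 : Z x y = 0
    · exact h'.supp x y (by simpa [h0] using hxy)
    · exact h.supp x y h0
  sum_eq_zero x := by
    simp only [Pi.add_apply, Finset.sum_add_distrib, h.sum_eq_zero, h'.sum_eq_zero, add_zero]

lemma IsFilling.add {Z Z' g g' : V → V → ZMod 2} (h : IsFilling T S Z g)
    (h' : IsFilling T S Z' g') : IsFilling T S (Z + Z') (g + g') where
  add_swap x y := by
    simp only [Pi.add_apply, ← h.add_swap, ← h'.add_swap]
    ring
  rot hT := by simp only [Pi.add_apply, h.rot hT, h'.rot hT]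
  exists_triangle {x y} hxy := by
    by_cases h0 : g x y = 0
    · exact h'.exists_triangle (by simpa [h0] using hxy)
    · exact h.exists_triangle h0

lemma IsFilling.mono {S' : Finset V} {Z g : V → V → ZMod 2} (h : IsFilling T S Z g)
    (hS : S ⊆ S') : IsFilling T S' Z g where
  add_swap := h.add_swap
  rot := h.rot
  exists_triangle hxy := by
    obtain ⟨z, hz, hx, hy, hzS⟩ := h.exists_triangle hxy
    exact ⟨z, hz, hS hx, hS hy, hS hzS⟩

/-- The darts `ab`, `bc` and `ca` of the boundary of a triangle. -/
def IsDartOf (a b c p q : V) : Prop :=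
  (p = a ∧ q = b) ∨ (p = b ∧ q = c) ∨ (p = c ∧ q = a)

namespace IsTriangleSystem

variable {a b c : V}

lemma isDartOf_iff (hT : IsTriangleSystem G T) (h : T a b c) {x y z : V} (hxyz : T x y z) :
    IsDartOf a b c x y ↔ IsDartOf a b c y z := by
  constructor
  · rintro (⟨rfl, rfl⟩ | ⟨rfl, rfl⟩ | ⟨rfl, rfl⟩)
    · exact Or.inr (Or.inl ⟨rfl, hT.unique hxyz h⟩)
    · exact Or.inr (Or.inr ⟨rfl, hT.unique hxyz (hT.rot h)⟩)
    · exact Or.inl ⟨rfl, hT.unique hxyz (hT.rot' h)⟩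
  · have hyzx := hT.rot hxyz
    rintro (⟨rfl, rfl⟩ | ⟨rfl, rfl⟩ | ⟨rfl, rfl⟩)
    · exact Or.inr (Or.inr ⟨hT.unique hyzx h, rfl⟩)
    · exact Or.inl ⟨hT.unique hyzx (hT.rot h), rfl⟩
    · exact Or.inr (Or.inl ⟨hT.unique hyzx (hT.rot' h), rfl⟩)

lemma exists_isFilling_triangle [DecidableEq V] (hT : IsTriangleSystem G T) (h : T a b c)
    (ha : a ∈ S) (hb : b ∈ S) (hc : c ∈ S) :
    ∃ g, IsFilling T S (pathInd [a, b, c, a]) g := by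
  classical
  have hab := (hT.adj h).ne
  have hbc := (hT.adj (hT.rot h)).ne
  have hca := (hT.adj (hT.rot' h)).ne
  refine ⟨fun p q => if IsDartOf a b c p q then 1 else 0, fun p q => ?_, fun hxyz => ?_,
    fun {p q} hpq => ?_⟩
  · simp only [pathInd, edgeInd, IsDartOf, Pi.add_apply, Pi.zero_apply]
    grind
  · simp only [hT.isDartOf_iff h hxyz]
  · rcases of_not_not fun hn => hpq (if_neg hn) with ⟨rfl, rfl⟩ | ⟨rfl, rfl⟩ | ⟨rfl, rfl⟩
    · exact ⟨_, h, ha, hb, hc⟩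
    · exact ⟨_, hT.rot h, hb, hc, ha⟩
    · exact ⟨_, hT.rot' h, hc, ha, hb⟩

lemma isModTwoCycle_triangle [DecidableEq V] [Fintype V] (hT : IsTriangleSystem G T)
    (h : T a b c) (ha : a ∈ S) (hb : b ∈ S) (hc : c ∈ S) :
    IsModTwoCycle G S (pathInd [a, b, c, a]) := by
  refine isModTwoCycle_pathInd (l := [b, c]) ?_ ?_
  · simp [hT.adj h, hT.adj (hT.rot h), hT.adj (hT.rot' h)]
  · simp only [List.cons_append, List.nil_append, List.forall_mem_cons]
    exact ⟨ha, hb, hc, ha, by simp⟩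

end IsTriangleSystem

section Insert

variable [DecidableEq V]

lemma IsModTwoCycle.of_insert [Fintype V] {Z : V → V → ZMod 2} (h : IsModTwoCycle G (insert p S) Z)
    (hp : ∀ q, Z p q = 0) : IsModTwoCycle G S Z where
  symm := h.symm
  supp x y hxy := by
    obtain ⟨hadj, hx, hy⟩ := h.supp x y hxy
    refine ⟨hadj, Finset.mem_of_mem_insert_of_ne hx ?_, Finset.mem_of_mem_insert_of_ne hy ?_⟩
    · rintro rfl; exact hxy (hp y)
    · rintro rfl; exact hxy ((h.symm x y).trans (hp x))
  sum_eq_zero := h.sum_eq_zero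

/-- Adding the triangle `p a b` to a cycle trades its edge `p a` for `p b`. -/
lemma add_pathInd_triangle_eq_zero {Z : V → V → ZMod 2} {a b q : V} (hpa : p ≠ a) (hpb : p ≠ b)
    (hab : a ≠ b) (ha : Z p a ≠ 0) (hq : q ≠ a → q ≠ b → Z p q = 0) (hqb : q ≠ b) :
    (Z + pathInd [p, a, b, p]) p q = 0 := by
  have hZa : Z p a = 1 := Fin.eq_one_of_ne_zero _ ha
  by_cases hqa : q = a
  · subst hqa
    simpa [pathInd, edgeInd, hpa, hpb, hab, hZa] using CharTwo.add_self_eq_zero (1 : ZMod 2)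
  · simp [pathInd, edgeInd, hpa, hpb, hqa, hqb, hq hqa hqb]

lemma CyclesBound.exists_isFilling_of_row_eq_zero [Fintype V] (h : CyclesBound G T S)
    {Z : V → V → ZMod 2} (hZ : IsModTwoCycle G (insert p S) Z) (hp : ∀ q, Z p q = 0) :
    ∃ g, IsFilling T (insert p S) Z g :=
  (h Z (hZ.of_insert hp)).imp fun _ hg => hg.mono (Finset.subset_insert p S)

/-- A cycle is cleared at `p` by adding the triangles of a fan at `p` one after the other. -/
lemma CyclesBound.exists_isFilling_of_isChain [Fintype V] (hT : IsTriangleSystem G T)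
    (h : CyclesBound G T S) {a : V} {ℓ : List V} (hℓ : (a :: ℓ).IsChain (T p))
    (hS : ∀ q ∈ a :: ℓ, q ∈ S) {Z : V → V → ZMod 2} (hZ : IsModTwoCycle G (insert p S) Z)
    (hsupp : ∀ q ∉ a :: ℓ, Z p q = 0) : ∃ g, IsFilling T (insert p S) Z g := by
  induction ℓ generalizing a Z with
  | nil =>
    have hne : ∀ q, q ≠ a → Z p q = 0 := fun q hq => hsupp q (by simpa using hq)
    have ha : Z p a = 0 := by
      rw [← hZ.sum_eq_zero p, Finset.sum_eq_single a (fun q _ => hne q) (by simp)]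
    exact h.exists_isFilling_of_row_eq_zero hZ fun q =>
      (eq_or_ne q a).elim (fun hq => hq ▸ ha) (hne q)
  | cons b ℓ ih =>
    have hS' : ∀ q ∈ b :: ℓ, q ∈ S := fun q hq => hS q (List.mem_cons_of_mem a hq)
    by_cases ha : Z p a = 0
    · refine ih hℓ.tail hS' hZ fun q hq => ?_
      by_cases hqa : q = a
      · exact hqa ▸ ha
      · exact hsupp q (List.not_mem_cons_of_ne_of_not_mem hqa hq)
    · have hpab : T p a b := hℓ.rel
      have hpa := hT.adj hpab
      have hab := hT.adj (hT.rot hpab)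
      have hbp := hT.adj (hT.rot' hpab)
      have haS : a ∈ insert p S := Finset.mem_insert_of_mem (hS a (by simp))
      have hbS : b ∈ insert p S := Finset.mem_insert_of_mem (hS b (by simp))
      have hpS := Finset.mem_insert_self p S
      have htri := hT.isModTwoCycle_triangle hpab hpS haS hbS
      obtain ⟨f, hf⟩ := hT.exists_isFilling_triangle hpab hpS haS hbS
      obtain ⟨g, hg⟩ := ih hℓ.tail hS' (hZ.add htri) fun q hq =>
        add_pathInd_triangle_eq_zero hpa.ne hbp.ne' hab.ne ha
          (fun hqa _ => hsupp q (List.not_mem_cons_of_ne_of_not_mem hqa hq))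
          (List.ne_of_not_mem_cons hq)
      have hZeq : Z + pathInd [p, a, b, p] + pathInd [p, a, b, p] = Z := by
        ext x y
        simp only [Pi.add_apply, add_assoc, CharTwo.add_self_eq_zero, add_zero]
      exact ⟨g + f, hZeq ▸ hg.add hf⟩

lemma CyclesBound.insert [Fintype V] (hT : IsTriangleSystem G T) (h : CyclesBound G T S)
    {ℓ : List V} (hℓ : ℓ.IsChain (T p)) (hmem : ∀ q, q ∈ ℓ ↔ G.Adj p q ∧ q ∈ S) :
    CyclesBound G T (insert p S) := by
  intro Z hZ
  have hsupp : ∀ q ∉ ℓ, Z p q = 0 := fun q hq => by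
    by_contra hne
    obtain ⟨hpq, -, hqS⟩ := hZ.supp p q hne
    exact hq ((hmem q).mpr ⟨hpq, Finset.mem_of_mem_insert_of_ne hqS hpq.ne'⟩)
  cases ℓ with
  | nil =>
    exact h.exists_isFilling_of_row_eq_zero hZ fun q => hsupp q List.not_mem_nil
  | cons a ℓ =>
    exact h.exists_isFilling_of_isChain hT hℓ (fun q hq => ((hmem q).mp hq).2) hZ hsupp

end Insert

variable [Fintype V]

lemma cyclesBound_univ {β : Type*} [LinearOrder β] (hT : IsTriangleSystem G T) {h : V → β}
    (hh : Function.Injective h)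
    (hfan : ∀ p, ∃ ℓ : List V, ℓ.IsChain (T p) ∧ ∀ q, q ∈ ℓ ↔ G.Adj p q ∧ h q < h p) :
    CyclesBound G T Finset.univ := by
  classical
  suffices H : ∀ S : Finset V, (∀ x ∈ S, ∀ y, h y < h x → y ∈ S) → CyclesBound G T S from
    H _ fun _ _ y _ => Finset.mem_univ y
  intro S
  induction S using Finset.induction_on_max_value h with
  | empty => exact fun _ Z hZ => ⟨0, fun x y => by
      by_contra hne
      exact Finset.notMem_empty x (hZ.supp x y (by simpa using Ne.symm hne)).2.1, by simp, by simp⟩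
  | insert p S hp hmax ih =>
    intro hlower
    have hlt : ∀ {q}, q ∈ S → h q < h p := fun {q} hq =>
      (hmax q hq).lt_of_ne (hh.ne (ne_of_mem_of_not_mem hq hp))
    have hS : ∀ {x y}, h x ≤ h p → h y < h x → x ∈ insert p S → y ∈ S := fun hxp hyx hx =>
      Finset.mem_of_mem_insert_of_ne (hlower _ hx _ hyx) fun hy => (hy ▸ hyx).not_ge hxp
    obtain ⟨ℓ, hℓ, hmem⟩ := hfan p
    refine (ih fun x hx y hyx => hS (hmax x hx) hyx (Finset.mem_insert_of_mem hx)).insert hT hℓ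
      fun q => (hmem q).trans (and_congr_right fun _ => ⟨fun hq => ?_, hlt⟩)
    exact hS le_rfl hq (Finset.mem_insert_self p S)

lemma exists_isRealizer_of_triangulation {α β : Type*} [LinearOrder α] [DenselyOrdered α]
    [NoMinOrder α] [NoMaxOrder α] [Nonempty α] [LinearOrder β] (hT : IsTriangleSystem G T)
    {h : V → β} (hh : Function.Injective h)
    (hfan : ∀ p, ∃ ℓ : List V, ℓ.IsChain (T p) ∧ ∀ q, q ∈ ℓ ↔ G.Adj p q ∧ h q < h p)
    {o₁ o₂ o₃ : V} (h₁ : LinkPath G T Finset.univ o₂ o₁ o₃)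
    (h₂ : LinkPath G T Finset.univ o₃ o₂ o₁) (h₃ : LinkPath G T Finset.univ o₁ o₃ o₂)
    (hinner : ∀ x, x ≠ o₁ → x ≠ o₂ → x ≠ o₃ → LinkCycle G T x)
    (hconn : ∀ U : Finset V, U.Nonempty → o₁ ∉ U → o₂ ∉ U → o₃ ∉ U →
      ∃ x ∈ U, ∃ y, y ∉ U ∧ G.Adj x y) :
    ∃ κ : Fin 3 → V → α, IsRealizer G κ := by
  classical
  have h12 : o₁ ≠ o₂ := h₁.adj_pred.1.ne
  have h31 : o₃ ≠ o₁ := h₃.adj_pred.1.ne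
  have h23 : o₂ ≠ o₃ := h₂.adj_pred.1.ne
  have hdisk : IsDisk G T o₁ o₂ Finset.univ [o₁, o₃, o₂] := by
    refine ⟨by simp [h12, h31.symm, h23.symm], by simp, rfl, rfl, ⟨h₁, h₃, h₂, trivial⟩,
      fun x _ hx => ⟨by simp, ?_⟩, cyclesBound_univ hT hh hfan, fun U hU hUS => ?_⟩
    · simp only [List.mem_cons, not_or] at hx
      exact hinner x hx.1 hx.2.2.1 hx.2.1
    · have hnotMem : ∀ o ∈ [o₁, o₃, o₂], o ∉ U := fun o ho hoU => (hUS o hoU).2 ho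
      obtain ⟨x, hx, y, hy, hxy⟩ := hconn U hU (hnotMem _ (by simp)) (hnotMem _ (by simp))
        (hnotMem _ (by simp))
      exact ⟨x, hx, y, Finset.mem_univ y, hy, hxy⟩
  exact (hdisk.canonicalOrder hT h12).exists_isRealizer

end Bounding

/-! ### Geometry of the plane -/

section Plane

/-- Twice the signed area of the triangle `P Q R`; it is positive if and only if the triangle is
counterclockwise. -/
def orient (P Q R : ℝ × ℝ) : ℝ := (Q.1 - P.1) * (R.2 - P.2) - (Q.2 - P.2) * (R.1 - P.1)

variable {A B C P Q R X Y : ℝ × ℝ} {m t : ℝ}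

lemma lineMap_eq_mk (P Q : ℝ × ℝ) (t : ℝ) :
    AffineMap.lineMap P Q t = (P.1 + t * (Q.1 - P.1), P.2 + t * (Q.2 - P.2)) := by
  ext <;> simp [AffineMap.lineMap_apply] <;> ring

lemma orient_lineMap (A B P Q : ℝ × ℝ) (t : ℝ) :
    orient A B (AffineMap.lineMap P Q t) = (1 - t) * orient A B P + t * orient A B Q := by
  simp only [orient, lineMap_eq_mk]
  ring

lemma orient_rotate (P Q R : ℝ × ℝ) : orient P Q R = orient Q R P := by
  simp only [orient]
  ring

lemma orient_swap (P Q R : ℝ × ℝ) : orient P R Q = -orient P Q R := by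
  simp only [orient]
  ring

lemma orient_prodSwap (P Q R : ℝ × ℝ) : orient P.swap Q.swap R.swap = -orient P Q R := by
  simp only [orient, Prod.fst_swap, Prod.snd_swap]
  ring

@[simp]
lemma orient_self_left (P Q : ℝ × ℝ) : orient P Q P = 0 := by
  simp [orient]

@[simp]
lemma orient_self_right (P Q : ℝ × ℝ) : orient P Q Q = 0 := by
  simp only [orient]
  ring

lemma orient_add_orient_add_orient (P Q R X : ℝ × ℝ) :
    orient P Q X + orient Q R X + orient R P X = orient P Q R := by
  simp only [orient]
  ring

lemma ne_of_orient_ne_zero (h : orient P Q R ≠ 0) : R ≠ P ∧ R ≠ Q :=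
  ⟨by rintro rfl; exact h (orient_self_left _ _), by rintro rfl; exact h (orient_self_right _ _)⟩

lemma le_orient_of_mem_segment (hP : m ≤ orient A B P) (hQ : m ≤ orient A B Q)
    (hX : X ∈ segment ℝ P Q) : m ≤ orient A B X := by
  rw [segment_eq_image_lineMap] at hX
  obtain ⟨t, ⟨h0, h1⟩, rfl⟩ := hX
  rw [orient_lineMap]
  nlinarith

lemma lt_orient_of_mem_openSegment (hP : m ≤ orient A B P) (hQ : m < orient A B Q)
    (hX : X ∈ openSegment ℝ P Q) : m < orient A B X := by
  rw [openSegment_eq_image_lineMap] at hX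
  obtain ⟨t, ⟨h0, h1⟩, rfl⟩ := hX
  rw [orient_lineMap]
  nlinarith

lemma eq_right_of_le_orient_of_mem_segment (hPQ : orient A B P < orient A B Q)
    (hX : X ∈ segment ℝ P Q) (h : orient A B Q ≤ orient A B X) : X = Q := by
  by_contra hXQ
  have hXP : X ≠ P := fun hXP => (hXP ▸ hPQ).not_ge h
  have hX' := mem_openSegment_of_ne_left_right hXP.symm (Ne.symm hXQ) hX
  rw [openSegment_eq_image_lineMap] at hX'
  obtain ⟨t, ⟨-, h1⟩, rfl⟩ := hX'
  rw [orient_lineMap] at h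
  nlinarith

lemma orient_pos_of_mem_segment_of_ne (hQ : 0 < orient P A Q) (hX : X ∈ segment ℝ P Q)
    (hXP : X ≠ P) : 0 < orient P A X := by
  by_cases hXQ : X = Q
  · rwa [hXQ]
  · exact lt_orient_of_mem_openSegment (orient_self_left P A).ge hQ
      (mem_openSegment_of_ne_left_right hXP.symm (Ne.symm hXQ) hX)

lemma orient_le_or_le_of_mem_segment (A B : ℝ × ℝ) (hX : X ∈ segment ℝ P Q) :
    orient A B X ≤ orient A B P ∨ orient A B X ≤ orient A B Q := by
  rw [segment_eq_image_lineMap] at hX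
  obtain ⟨t, ⟨h0, h1⟩, rfl⟩ := hX
  rw [orient_lineMap]
  rcases le_total (orient A B P) (orient A B Q) with h | h
  · right
    nlinarith
  · left
    nlinarith

lemma orient_cases_of_mem_openSegment (hX : X ∈ openSegment ℝ P Q) (h : orient A B X = 0) :
    0 < orient A B P ∧ orient A B Q < 0 ∨ orient A B P < 0 ∧ 0 < orient A B Q ∨
      orient A B P = 0 ∧ orient A B Q = 0 := by
  rw [openSegment_eq_image_lineMap] at hX
  obtain ⟨t, ⟨h0, h1⟩, rfl⟩ := hX
  rw [orient_lineMap] at h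
  rcases lt_trichotomy (orient A B P) 0 with hP | hP | hP
  · exact Or.inr (Or.inl ⟨hP, by nlinarith⟩)
  · rw [hP, mul_zero, zero_add, mul_eq_zero] at h
    exact Or.inr (Or.inr ⟨hP, h.resolve_left h0.ne'⟩)
  · exact Or.inl ⟨hP, by nlinarith⟩

lemma orient_eq_zero_of_mem_segment (hX : X ∈ segment ℝ P Q) : orient P Q X = 0 := by
  rw [segment_eq_image_lineMap] at hX
  obtain ⟨t, -, rfl⟩ := hX
  simp [orient_lineMap]

lemma orient_smul_eq (P Q R X : ℝ × ℝ) :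
    orient P Q R • X = orient Q R X • P + orient R P X • Q + orient P Q X • R := by
  ext <;> simp [orient] <;> ring

lemma mem_segment_of_orient_eq_zero (hD : 0 < orient P Q R) (h0 : orient R P X = 0)
    (h1 : 0 ≤ orient P Q X) (h2 : 0 ≤ orient Q R X) : X ∈ segment ℝ P R := by
  refine ⟨orient Q R X / orient P Q R, orient P Q X / orient P Q R, by positivity, by positivity,
    ?_, ?_⟩
  · rw [← add_div, div_eq_one_iff_eq hD.ne']
    linarith [orient_add_orient_add_orient P Q R X]
  · have h := orient_smul_eq P Q R X
    rw [h0, zero_smul, add_zero] at h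
    rw [← smul_right_injective _ hD.ne' |>.eq_iff]
    simp only [smul_add, smul_smul, mul_div_cancel₀ _ hD.ne', h]

lemma exists_eq_lineMap_of_orient_eq_zero (hPQ : P ≠ Q) (h : orient P Q X = 0) :
    ∃ t : ℝ, X = AffineMap.lineMap P Q t := by
  simp only [orient] at h
  by_cases h1 : Q.1 - P.1 = 0
  · have h2 : Q.2 - P.2 ≠ 0 := fun h2 => hPQ (Prod.ext (by linarith) (by linarith))
    have h3 : X.1 - P.1 = 0 := by simpa [h1, h2] using h
    refine ⟨(X.2 - P.2) / (Q.2 - P.2), ?_⟩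
    rw [lineMap_eq_mk, h1, div_mul_cancel₀ _ h2]
    ext <;> simp only [] <;> linarith
  · refine ⟨(X.1 - P.1) / (Q.1 - P.1), ?_⟩
    rw [lineMap_eq_mk]
    ext <;> field_simp <;> linarith

lemma lineMap_mem_segment_lineMap_iff (hPQ : P ≠ Q) {r s t : ℝ} :
    AffineMap.lineMap P Q r ∈ segment ℝ (AffineMap.lineMap P Q s) (AffineMap.lineMap P Q t) ↔
      r ∈ Set.uIcc s t := by
  rw [← image_segment, (AffineMap.lineMap_injective ℝ hPQ).mem_set_image, segment_eq_uIcc]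

lemma left_mem_segment_of_orient_eq_zero (hPQ : P ≠ Q) (hA : orient P Q A = 0)
    (hB : orient P Q B = 0) (hXP : X ∈ openSegment ℝ P Q) (hXA : X ∈ segment ℝ A B)
    (hA' : A ∉ segment ℝ P Q) (hB' : B ∉ segment ℝ P Q) : P ∈ segment ℝ A B := by
  obtain ⟨s, rfl⟩ := exists_eq_lineMap_of_orient_eq_zero hPQ hA
  obtain ⟨t, rfl⟩ := exists_eq_lineMap_of_orient_eq_zero hPQ hB
  rw [openSegment_eq_image_lineMap] at hXP
  obtain ⟨r, ⟨hr0, hr1⟩, rfl⟩ := hXP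
  have hs : s ∉ Set.Icc (0 : ℝ) 1 := fun h => hA' (lineMap_mem_segment ℝ P Q h)
  have ht : t ∉ Set.Icc (0 : ℝ) 1 := fun h => hB' (lineMap_mem_segment ℝ P Q h)
  rw [lineMap_mem_segment_lineMap_iff hPQ, Set.mem_uIcc] at hXA
  suffices h : (0 : ℝ) ∈ Set.uIcc s t by
    simpa using (lineMap_mem_segment_lineMap_iff hPQ).mpr h
  rw [Set.mem_uIcc]
  simp only [Set.mem_Icc, not_and_or, not_le] at hs ht
  grind

lemma exists_mem_openSegment_orient_eq_zero (hP : 0 < orient A B P) (hQ : orient A B Q < 0) :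
    ∃ Z ∈ openSegment ℝ P Q, orient A B Z = 0 := by
  have hD : 0 < orient A B P - orient A B Q := by linarith
  refine ⟨AffineMap.lineMap P Q (orient A B P / (orient A B P - orient A B Q)),
    lineMap_mem_openSegment ℝ P Q ⟨by positivity, (div_lt_one hD).mpr (by linarith)⟩, ?_⟩
  rw [orient_lineMap]
  field_simp
  ring

lemma sameRay_of_orient_eq_zero (hQ : 0 < orient P A Q) (hR : 0 < orient P A R)
    (h : orient P Q R = 0) : SameRay ℝ (Q -ᵥ P) (R -ᵥ P) := by
  obtain ⟨t, rfl⟩ :=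
    exists_eq_lineMap_of_orient_eq_zero (ne_of_orient_ne_zero hQ.ne').1.symm h
  rw [orient_lineMap, orient_self_left, mul_zero, zero_add] at hR
  rw [AffineMap.lineMap_vsub_left]
  exact SameRay.sameRay_pos_smul_right _ (pos_of_mul_pos_left hR hQ.le)

/-- The crossing point is found with the intermediate value theorem, as a zero of
the minimum of the two orientations which cut out the angle at `A`. -/
lemma exists_mem_segment_union_segment (hD : 0 < orient A B C) (hX₁ : 0 < orient A B X)
    (hX₂ : 0 < orient C A X) (hY : ¬ (0 ≤ orient A B Y ∧ 0 ≤ orient C A Y))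
    (hBC : ∀ Z ∈ segment ℝ X Y, 0 ≤ orient A B Z → 0 ≤ orient C A Z → 0 ≤ orient B C Z) :
    ∃ Z ∈ segment ℝ X Y, Z ∈ segment ℝ B A ∪ segment ℝ A C := by
  let g : ℝ → ℝ := fun t => min (orient A B (AffineMap.lineMap X Y t))
    (orient C A (AffineMap.lineMap X Y t))
  have hg : Continuous g := by
    simp only [g, orient_lineMap]
    fun_prop
  have hg0 : 0 ≤ g 0 := by simp [g, hX₁.le, hX₂.le]
  have hg1 : g 1 ≤ 0 := by
    simp only [g, AffineMap.lineMap_apply_one, min_le_iff]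
    by_contra! h
    exact hY ⟨h.1.le, h.2.le⟩
  obtain ⟨t, ht, hgt⟩ := intermediate_value_Icc' zero_le_one hg.continuousOn ⟨hg1, hg0⟩
  have hZ := lineMap_mem_segment ℝ X Y ht
  refine ⟨_, hZ, ?_⟩
  have hmin := hgt.symm.le
  rw [le_min_iff] at hmin
  have hα := hBC _ hZ hmin.1 hmin.2
  rcases min_choice (orient A B (AffineMap.lineMap X Y t))
    (orient C A (AffineMap.lineMap X Y t)) with h | h
  · exact Or.inl (mem_segment_of_orient_eq_zero (by rwa [← orient_rotate])
      (h.symm.trans hgt) hα hmin.2)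
  · exact Or.inr (mem_segment_of_orient_eq_zero hD (h.symm.trans hgt) hmin.1 hα)

/-- The closed triangle with vertices `P`, `Q`, `R`, provided that these are listed
counterclockwise; the inequalities define the wrong set otherwise. -/
def closedTriangle (P Q R : ℝ × ℝ) : Set (ℝ × ℝ) :=
  {X | 0 ≤ orient P Q X ∧ 0 ≤ orient Q R X ∧ 0 ≤ orient R P X}

lemma closedTriangle_rotate (P Q R : ℝ × ℝ) : closedTriangle Q R P = closedTriangle P Q R := by
  ext X
  simp only [closedTriangle, Set.mem_ofPred_eq]
  tauto

lemma convex_closedTriangle (P Q R : ℝ × ℝ) : Convex ℝ (closedTriangle P Q R) :=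
  convex_iff_segment_subset.mpr fun _ hX _ hY _ hZ =>
    ⟨le_orient_of_mem_segment hX.1 hY.1 hZ, le_orient_of_mem_segment hX.2.1 hY.2.1 hZ,
      le_orient_of_mem_segment hX.2.2 hY.2.2 hZ⟩

lemma exists_mem_segment_of_mem_closedTriangle (hD : 0 < orient P Q R) (hX : 0 < orient P Q X)
    (hXT : X ∈ closedTriangle P Q R) : ∃ Y ∈ segment ℝ Q R, X ∈ segment ℝ P Y := by
  obtain ⟨-, hX₂, hX₃⟩ := hXT
  have : 0 < orient R P X + orient P Q X := by linarith
  refine ⟨(orient R P X / (orient R P X + orient P Q X)) • Q +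
      (orient P Q X / (orient R P X + orient P Q X)) • R,
    ⟨_, _, by positivity, by positivity, by field_simp, rfl⟩,
    orient Q R X / orient P Q R, (orient R P X + orient P Q X) / orient P Q R,
    by positivity, by positivity, ?_, smul_right_injective _ hD.ne' ?_⟩
  · rw [← add_div, div_eq_one_iff_eq hD.ne', ← orient_add_orient_add_orient P Q R X]
    ring
  · have hcoef (t : ℝ) : orient P Q R * ((orient R P X + orient P Q X) / orient P Q R *
        (t / (orient R P X + orient P Q X))) = t := by field_simp
    simp only [smul_add, smul_smul, hcoef, mul_div_cancel₀ _ hD.ne', orient_smul_eq P Q R X,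
      add_assoc]

lemma exists_forall_orient_nonneg {ι : Type*} {s : Set ι} (hs : s.Finite) (hne : s.Nonempty)
    {f : ι → ℝ × ℝ} (hD : 0 < orient P Q R) (hf : ∀ i ∈ s, 0 < orient P Q (f i)) :
    ∃ i ∈ s, ∀ j ∈ s, 0 ≤ orient P (f i) (f j) ∧
      (orient P (f i) (f j) = 0 → orient P Q (f i) ≤ orient P Q (f j)) := by
  obtain ⟨i, hi, hmax⟩ := hs.exists_maximalFor
    (fun i => toLex (orient R P (f i) / orient P Q (f i), -orient P Q (f i))) s hne
  refine ⟨i, hi, fun j hj => ?_⟩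
  have hij : orient P Q R * orient P (f i) (f j) =
      orient R P (f i) * orient P Q (f j) - orient R P (f j) * orient P Q (f i) := by
    simp only [orient]
    ring
  have h := (le_total _ _).elim (hmax (j := j) hj) id
  simp only [Prod.Lex.toLex_le_toLex, div_lt_div_iff₀ (hf j hj) (hf i hi),
    div_eq_div_iff (hf j hj).ne' (hf i hi).ne', neg_le_neg_iff] at h
  rcases h with h | ⟨h, hle⟩
  · have hpos : 0 < orient P (f i) (f j) := pos_of_mul_pos_right (by linarith) hD.le
    exact ⟨hpos.le, fun h0 => absurd h0 hpos.ne'⟩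
  · have hzero : orient P (f i) (f j) = 0 :=
      (mul_eq_zero.mp (hij.trans (by linarith))).resolve_left hD.ne'
    exact ⟨hzero.ge, fun _ => hle⟩

lemma exists_mem_segment_union_segment_of_notMem_closedTriangle {D W Z : ℝ × ℝ}
    (hD : 0 < orient X P D) (hW : W ∈ closedTriangle X P D) (hWP : 0 < orient X P W)
    (hZ : Z ∈ openSegment ℝ X W) (hY : orient X W Y < 0) (hYT : Y ∉ closedTriangle X P D) :
    ∃ Q ∈ segment ℝ Z Y, Q ∈ segment ℝ D P ∪ segment ℝ P X ∧ orient X W Q ≤ 0 := by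
  have hD' : 0 < orient P D X := by rwa [← orient_rotate]
  have hcone {Q : ℝ × ℝ} (hQW : orient X W Q ≤ 0) (hQP : 0 ≤ orient X P Q) :
      0 ≤ orient D X Q := by
    have hQ : orient X P D * orient X W Q =
        orient D X W * orient X P Q - orient D X Q * orient X P W := by
      simp only [orient]
      ring
    have hle := mul_nonpos_of_nonneg_of_nonpos hD.le hQW
    have hle' := mul_nonneg hW.2.2 hQP
    exact nonneg_of_mul_nonneg_left (by linarith) hWP
  have hQW {Q : ℝ × ℝ} (hQ : Q ∈ segment ℝ Z Y) : orient X W Q ≤ 0 := by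
    have hZW := orient_eq_zero_of_mem_segment (openSegment_subset_segment _ _ _ hZ)
    rcases orient_le_or_le_of_mem_segment X W hQ with h | h <;> linarith
  obtain ⟨Q, hQ, hQ'⟩ := exists_mem_segment_union_segment hD'
    (lt_orient_of_mem_openSegment hW.2.1 hD' (openSegment_symm ℝ X W ▸ hZ))
    (lt_orient_of_mem_openSegment (by simp) hWP hZ)
    (fun h => hYT ⟨h.2, h.1, hcone hY.le h.2⟩) (fun Q hQ _ hQP => hcone (hQW hQ) hQP)
  exact ⟨Q, hQ, hQ', hQW hQ⟩

end Plane

/-! ### Plane drawings -/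

section Drawing

variable {V : Type*} {G : SimpleGraph V} {f : V → ℝ × ℝ} {a b c d x y z : V}

lemma segment_linearEquiv_apply {E : Type*} [AddCommGroup E] [Module ℝ E] (e : E ≃ₗ[ℝ] E)
    (a b : E) : segment ℝ (e a) (e b) = e '' segment ℝ a b :=
  (image_segment ℝ e.toLinearMap.toAffineMap a b).symm

lemma mem_segment_or_mem_segment_of_mem_of_mem {E : Type*} [AddCommGroup E] [Module ℝ E]
    {P A B X : E} (hA : X ∈ segment ℝ P A) (hB : X ∈ segment ℝ P B) (hX : X ≠ P) :
    A ∈ segment ℝ P B ∨ B ∈ segment ℝ P A := by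
  simp only [mem_segment_iff_wbtw] at hA hB ⊢
  exact wbtw_total_of_sameRay_vsub_left <|
    hA.sameRay_vsub_left.symm.trans hB.sameRay_vsub_left fun h =>
      absurd (vsub_eq_zero_iff_eq.mp h) hX

namespace IsPlanarDrawing

lemma injective (hP : IsPlanarDrawing G f) : Function.Injective f := hP.1

lemma disjoint_segment (hP : IsPlanarDrawing G f) (hab : G.Adj a b) (hcd : G.Adj c d)
    (hac : a ≠ c) (had : a ≠ d) (hbc : b ≠ c) (hbd : b ≠ d) :
    Disjoint (segment ℝ (f a) (f b)) (segment ℝ (f c) (f d)) :=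
  hP.2.1 a b c d hab hcd hac had hbc hbd

lemma segment_inter_segment (hP : IsPlanarDrawing G f) (hab : G.Adj a b) (hac : G.Adj a c)
    (hbc : b ≠ c) : segment ℝ (f a) (f b) ∩ segment ℝ (f a) (f c) = {f a} :=
  hP.2.2.1 a b c hab hac hbc

lemma notMem_segment (hP : IsPlanarDrawing G f) (hab : G.Adj a b) (hca : c ≠ a) (hcb : c ≠ b) :
    f c ∉ segment ℝ (f a) (f b) :=
  hP.2.2.2 a b c hab hca hcb

lemma of_disjoint_of_notMem (hf : Function.Injective f)
    (hdisj : ∀ a b c d : V, G.Adj a b → G.Adj c d → a ≠ c → a ≠ d → b ≠ c → b ≠ d →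
      Disjoint (segment ℝ (f a) (f b)) (segment ℝ (f c) (f d)))
    (hoff : ∀ a b c : V, G.Adj a b → c ≠ a → c ≠ b → f c ∉ segment ℝ (f a) (f b)) :
    IsPlanarDrawing G f := by
  refine ⟨hf, hdisj, fun a b c hab hac hbc => Set.Subset.antisymm ?_ ?_, hoff⟩
  · rintro X ⟨hb, hc⟩
    by_contra hX
    rcases mem_segment_or_mem_segment_of_mem_of_mem hb hc hX with h | h
    · exact hoff a c b hac hab.ne' hbc h
    · exact hoff a b c hab hac.ne' hbc.symm h
  · rintro _ rfl
    exact ⟨left_mem_segment _ _ _, left_mem_segment _ _ _⟩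

lemma eq_or_eq_of_mem (hP : IsPlanarDrawing G f) (hab : G.Adj a b) (hcd : G.Adj c d) {X : ℝ × ℝ}
    (h₁ : X ∈ segment ℝ (f a) (f b)) (h₂ : X ∈ segment ℝ (f c) (f d)) :
    X = f a ∨ X = f b ∨ s(a, b) = s(c, d) := by
  have hcommon {u v w : V} (huv : G.Adj u v) (huw : G.Adj u w)
      (hv : X ∈ segment ℝ (f u) (f v)) (hw : X ∈ segment ℝ (f u) (f w)) : X = f u ∨ v = w := by
    by_cases h : v = w
    · exact Or.inr h
    · exact Or.inl ((hP.segment_inter_segment huv huw h).subset ⟨hv, hw⟩)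
  have h₁' := segment_symm ℝ (f a) (f b) ▸ h₁
  have h₂' := segment_symm ℝ (f c) (f d) ▸ h₂
  rw [Sym2.eq_iff]
  by_cases hac : a = c
  · subst hac
    have := hcommon hab hcd h₁ h₂
    tauto
  by_cases had : a = d
  · subst had
    have := hcommon hab hcd.symm h₁ h₂'
    tauto
  by_cases hbc : b = c
  · subst hbc
    have := hcommon hab.symm hcd h₁' h₂
    tauto
  by_cases hbd : b = d
  · subst hbd
    have := hcommon hab.symm hcd.symm h₁' h₂'
    tauto
  exact absurd h₂ (Set.disjoint_left.mp (hP.disjoint_segment hab hcd hac had hbc hbd) h₁)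

lemma eq_of_sameRay (hP : IsPlanarDrawing G f) (hy : G.Adj x y) (hz : G.Adj x z)
    (h : SameRay ℝ (f y -ᵥ f x) (f z -ᵥ f x)) : y = z := by
  by_contra hne
  rcases wbtw_total_of_sameRay_vsub_left (R := ℝ) h with h | h <;>
    rw [← mem_segment_iff_wbtw] at h
  · exact hP.notMem_segment hz hy.ne' hne h
  · exact hP.notMem_segment hy hz.ne' (Ne.symm hne) h

lemma comp_linearEquiv (hP : IsPlanarDrawing G f) (e : (ℝ × ℝ) ≃ₗ[ℝ] ℝ × ℝ) :
    IsPlanarDrawing G (e ∘ f) := by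
  refine of_disjoint_of_notMem (e.injective.comp hP.injective) ?_ ?_
  · intro a b c d hab hcd hac had hbc hbd
    simp only [Function.comp_apply, segment_linearEquiv_apply, Set.disjoint_image_iff e.injective]
    exact hP.disjoint_segment hab hcd hac had hbc hbd
  · intro a b c hab hca hcb
    simp only [Function.comp_apply, segment_linearEquiv_apply, e.injective.mem_set_image]
    exact hP.notMem_segment hab hca hcb

lemma sup_edge (hP : IsPlanarDrawing G f)
    (hoff : ∀ c, c ≠ a → c ≠ b → f c ∉ segment ℝ (f a) (f b))
    (hdisj : ∀ c d, G.Adj c d → a ≠ c → a ≠ d → b ≠ c → b ≠ d →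
      Disjoint (segment ℝ (f a) (f b)) (segment ℝ (f c) (f d))) :
    IsPlanarDrawing (G ⊔ SimpleGraph.edge a b) f := by
  have hadj {u v : V} (h : (G ⊔ SimpleGraph.edge a b).Adj u v) :
      G.Adj u v ∨ u = a ∧ v = b ∨ u = b ∧ v = a := by
    rw [SimpleGraph.sup_adj, SimpleGraph.edge_adj] at h
    tauto
  refine of_disjoint_of_notMem hP.injective ?_ ?_
  · intro u v u' v' h h' huu huv hvu hvv
    rcases hadj h with hG | ⟨rfl, rfl⟩ | ⟨rfl, rfl⟩ <;>
      rcases hadj h' with hG' | ⟨rfl, rfl⟩ | ⟨rfl, rfl⟩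
    · exact hP.disjoint_segment hG hG' huu huv hvu hvv
    · exact (hdisj u v hG huu.symm hvu.symm huv.symm hvv.symm).symm
    · rw [segment_symm ℝ (f u')]
      exact (hdisj u v hG huv.symm hvv.symm huu.symm hvu.symm).symm
    · exact hdisj u' v' hG' huu huv hvu hvv
    · exact absurd rfl huu
    · exact absurd rfl huv
    · rw [segment_symm ℝ (f u)]
      exact hdisj u' v' hG' hvu hvv huu huv
    · exact absurd rfl huv
    · exact absurd rfl huu
  · intro u v w h hwu hwv
    rcases hadj h with hG | ⟨rfl, rfl⟩ | ⟨rfl, rfl⟩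
    · exact hP.notMem_segment hG hwu hwv
    · exact hoff w hwu hwv
    · rw [segment_symm]
      exact hoff w hwv hwu

lemma map_inl {W : Type*} {g : W → ℝ × ℝ} {K : Set (ℝ × ℝ)} (hP : IsPlanarDrawing G f)
    (hg : Function.Injective g) (hK : Convex ℝ K) (hfK : ∀ v, f v ∈ K) (hgK : ∀ w, g w ∉ K) :
    IsPlanarDrawing (G.map Function.Embedding.inl) (Sum.elim f g) := by
  refine of_disjoint_of_notMem ?_ ?_ ?_
  · exact hP.injective.sumElim hg fun v w h => hgK w (h ▸ hfK v)
  · rintro _ _ _ _ ⟨-, a, b, hab, rfl, rfl⟩ ⟨-, c, d, hcd, rfl, rfl⟩ hac had hbc hbd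
    exact hP.disjoint_segment hab hcd (ne_of_apply_ne _ hac) (ne_of_apply_ne _ had)
      (ne_of_apply_ne _ hbc) (ne_of_apply_ne _ hbd)
  · rintro _ _ (w | w) ⟨-, a, b, hab, rfl, rfl⟩ hwa hwb
    · exact hP.notMem_segment hab (ne_of_apply_ne _ hwa) (ne_of_apply_ne _ hwb)
    · exact fun h => hgK w (hK.segment_subset (hfK a) (hfK b) h)

end IsPlanarDrawing

/-- A straight-line drawing is saturated if every edge that could be added to it as a segment is
already present. For plane drawings this is maximality among the plane drawings with the same
vertex positions. -/
def IsSaturated (G : SimpleGraph V) (f : V → ℝ × ℝ) : Prop :=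
  ∀ a b, a ≠ b → (∀ c, c ≠ a → c ≠ b → f c ∉ segment ℝ (f a) (f b)) →
    (∀ c d, G.Adj c d → a ≠ c → a ≠ d → b ≠ c → b ≠ d →
      Disjoint (segment ℝ (f a) (f b)) (segment ℝ (f c) (f d))) → G.Adj a b

lemma IsPlanarDrawing.exists_isSaturated [Finite V] (hP : IsPlanarDrawing G f) :
    ∃ H, G ≤ H ∧ IsPlanarDrawing H f ∧ IsSaturated H f := by
  obtain ⟨H, hGH, hH⟩ :=
    (Set.toFinite {H : SimpleGraph V | IsPlanarDrawing H f}).exists_le_maximal (a := G) hP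
  refine ⟨H, hGH, hH.prop, fun a b hab hoff hdisj => ?_⟩
  have hle : H ⊔ SimpleGraph.edge a b ≤ H :=
    hH.le_of_ge (hH.prop.sup_edge hoff hdisj) le_sup_left
  exact hle (Or.inr (by simp [SimpleGraph.edge_adj, hab]))

namespace IsSaturated

lemma comp_linearEquiv (hS : IsSaturated G f) (e : (ℝ × ℝ) ≃ₗ[ℝ] ℝ × ℝ) :
    IsSaturated G (e ∘ f) := by
  intro a b hab hoff hdisj
  simp only [Function.comp_apply, segment_linearEquiv_apply, e.injective.mem_set_image,
    Set.disjoint_image_iff e.injective] at hoff hdisj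
  exact hS a b hab hoff hdisj

lemma adj (hS : IsSaturated G f) (hP : IsPlanarDrawing G f) (hab : a ≠ b)
    (hoff : ∀ c, c ≠ a → c ≠ b → f c ∉ segment ℝ (f a) (f b))
    (hcross : ∀ c d, G.Adj c d → 0 < orient (f a) (f b) (f c) → orient (f a) (f b) (f d) < 0 →
      Disjoint (openSegment ℝ (f a) (f b)) (segment ℝ (f c) (f d))) : G.Adj a b := by
  refine hS a b hab hoff fun c d hcd hac had hbc hbd => Set.disjoint_left.mpr fun X hX hX' => ?_
  have hXab : X ∈ openSegment ℝ (f a) (f b) := mem_openSegment_of_ne_left_right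
    (fun h => hP.notMem_segment hcd hac had (h ▸ hX'))
    (fun h => hP.notMem_segment hcd hbc hbd (h ▸ hX')) hX
  have hXcd : X ∈ openSegment ℝ (f c) (f d) := mem_openSegment_of_ne_left_right
    (fun h => hoff c hac.symm hbc.symm (h ▸ hX)) (fun h => hoff d had.symm hbd.symm (h ▸ hX)) hX'
  rcases orient_cases_of_mem_openSegment hXcd (orient_eq_zero_of_mem_segment hX) with
    ⟨hc, hd⟩ | ⟨hc, hd⟩ | ⟨hc, hd⟩
  · exact Set.disjoint_left.mp (hcross c d hcd hc hd) hXab hX'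
  · exact Set.disjoint_left.mp (hcross d c hcd.symm hd hc) hXab (segment_symm ℝ (f c) _ ▸ hX')
  · exact hP.notMem_segment hcd hac had <| left_mem_segment_of_orient_eq_zero
      (hP.injective.ne hab) hc hd hXab hX' (hoff c hac.symm hbc.symm) (hoff d had.symm hbd.symm)

end IsSaturated

end Drawing

/-! ### Corners and triangular faces -/

section Corners

variable {V : Type*} {G : SimpleGraph V} {f : V → ℝ × ℝ} {x y z w c d : V}

/-- The edges `xy` and `xz` bound a convex corner at `x`: the angle from `xy` counterclockwise to
`xz` is less than `π` and contains no further edge at `x`. -/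
structure IsConvexCorner (G : SimpleGraph V) (f : V → ℝ × ℝ) (x y z : V) : Prop where
  adj_left : G.Adj x y
  adj_right : G.Adj x z
  orient_pos : 0 < orient (f x) (f y) (f z)
  not_between : ∀ w, G.Adj x w → ¬ (0 < orient (f x) (f y) (f w) ∧ 0 < orient (f x) (f w) (f z))

/-- The triangle `xyz`, listed counterclockwise, is a face of the drawing: each of its angles is a
convex corner. -/
def IsFace (G : SimpleGraph V) (f : V → ℝ × ℝ) (x y z : V) : Prop :=
  IsConvexCorner G f x y z ∧ IsConvexCorner G f y z x ∧ IsConvexCorner G f z x y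

/-- The closed triangle `xyz`, listed counterclockwise, contains no vertices except its own. -/
def IsVacant (f : V → ℝ × ℝ) (x y z : V) : Prop :=
  ∀ w, w ≠ x → w ≠ y → w ≠ z → f w ∉ closedTriangle (f x) (f y) (f z)

lemma IsFace.rotate (h : IsFace G f x y z) : IsFace G f y z x := ⟨h.2.1, h.2.2, h.1⟩

lemma IsVacant.rotate (h : IsVacant f x y z) : IsVacant f y z x := fun w hy hz hx => by
  rw [closedTriangle_rotate]
  exact h w hx hy hz

namespace IsPlanarDrawing

lemma orient_nonneg_of_mem_segment (hP : IsPlanarDrawing G f) (hxy : G.Adj x y) (hxz : G.Adj x z)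
    (hD : 0 < orient (f x) (f y) (f z)) (hcd : G.Adj c d) (hcx : c ≠ x) (hdx : d ≠ x) {X : ℝ × ℝ}
    (hX : X ∈ segment ℝ (f c) (f d)) (hX₁ : 0 < orient (f x) (f y) X)
    (hX₂ : 0 < orient (f z) (f x) X) (hX₃ : 0 ≤ orient (f y) (f z) X)
    (hc : orient (f y) (f z) X ≤ orient (f y) (f z) (f c)) (hy : f y ∉ segment ℝ X (f c))
    (hz : f z ∉ segment ℝ X (f c)) :
    0 ≤ orient (f x) (f y) (f c) ∧ 0 ≤ orient (f z) (f x) (f c) := by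
  by_contra hout
  obtain ⟨Z, hZ, hside⟩ := exists_mem_segment_union_segment hD hX₁ hX₂ hout
    fun Z hZ _ _ => le_orient_of_mem_segment hX₃ (hX₃.trans hc) hZ
  have hZcd : Z ∈ segment ℝ (f c) (f d) :=
    (convex_segment _ _).segment_subset hX (left_mem_segment _ _ _) hZ
  have hne {u : V} (h : f u ∉ segment ℝ X (f c)) : Z ≠ f u := by
    rintro rfl
    exact h hZ
  have hZx : Z ≠ f x := by
    rintro rfl
    exact hP.notMem_segment hcd hcx.symm hdx.symm hZcd
  have hedge (u : V) : s(x, u) ≠ s(c, d) := fun h => by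
    rcases Sym2.mem_iff.mp (h ▸ Sym2.mem_mk_left x u) with h | h
    · exact hcx h.symm
    · exact hdx h.symm
  rcases hside with h | h
  · rw [segment_symm] at h
    rcases hP.eq_or_eq_of_mem hxy hcd h hZcd with h | h | h
    exacts [hZx h, hne hy h, hedge y h]
  · rcases hP.eq_or_eq_of_mem hxz hcd h hZcd with h | h | h
    exacts [hZx h, hne hz h, hedge z h]

lemma orient_pos_of_mem_closedTriangle (hP : IsPlanarDrawing G f) (hxy : G.Adj x y)
    (hxz : G.Adj x z) (hD : 0 < orient (f x) (f y) (f z)) (hwx : w ≠ x) (hwy : w ≠ y) (hwz : w ≠ z)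
    (hw : f w ∈ closedTriangle (f x) (f y) (f z)) :
    0 < orient (f x) (f y) (f w) ∧ 0 < orient (f z) (f x) (f w) :=
  ⟨hw.1.lt_of_ne' fun h => hP.notMem_segment hxy.symm hwy hwx <|
      mem_segment_of_orient_eq_zero (by rwa [← orient_rotate]) h hw.2.1 hw.2.2,
    hw.2.2.lt_of_ne' fun h => hP.notMem_segment hxz hwx hwz <|
      mem_segment_of_orient_eq_zero hD h hw.1 hw.2.1⟩

end IsPlanarDrawing

lemma IsVacant.isConvexCorner (hP : IsPlanarDrawing G f) (hE : IsVacant f x y z)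
    (hxy : G.Adj x y) (hyz : G.Adj y z) (hxz : G.Adj x z) (hD : 0 < orient (f x) (f y) (f z)) :
    IsConvexCorner G f x y z := by
  refine ⟨hxy, hxz, hD, fun w hxw ⟨hw₁, hw₂⟩ => ?_⟩
  rw [← orient_rotate (f z)] at hw₂
  have hw₃ : orient (f y) (f z) (f w) < 0 := by
    by_contra! hw₃
    have hwy : w ≠ y := fun h => (ne_of_orient_ne_zero hw₁.ne').2 (h ▸ rfl)
    have hwz : w ≠ z := fun h => (ne_of_orient_ne_zero hw₂.ne').1 (h ▸ rfl)
    exact hE w hxw.ne' hwy hwz ⟨hw₁.le, hw₃, hw₂.le⟩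
  obtain ⟨X, hX, hX₃⟩ := exists_mem_openSegment_orient_eq_zero (A := f y) (B := f z)
    (by rwa [← orient_rotate]) hw₃
  have hX₁ : 0 < orient (f x) (f y) X :=
    lt_orient_of_mem_openSegment (orient_self_left _ _).ge hw₁ hX
  have hX₂ : 0 < orient (f z) (f x) X :=
    lt_orient_of_mem_openSegment (orient_self_right _ _).ge hw₂ hX
  have hXyz : X ∈ segment ℝ (f z) (f y) := mem_segment_of_orient_eq_zero (Q := f x)
    (by rwa [orient_rotate]) hX₃ hX₂.le hX₁.le
  rcases hP.eq_or_eq_of_mem hyz.symm hxw hXyz (openSegment_subset_segment _ _ _ hX) with h | h | h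
  · exact (ne_of_orient_ne_zero hX₂.ne').1 h
  · exact (ne_of_orient_ne_zero hX₁.ne').2 h
  · rcases Sym2.mem_iff.mp (h ▸ Sym2.mem_mk_left x w : x ∈ s(z, y)) with h | h
    exacts [hxz.ne h, hxy.ne h]

/-- An edge crossing the segment `xw` would have an end in the triangle that lies
farther from the line `yz` than `w`. -/
lemma IsSaturated.adj_of_forall_orient_le (hS : IsSaturated G f) (hP : IsPlanarDrawing G f)
    (hxy : G.Adj x y) (hxz : G.Adj x z) (hD : 0 < orient (f x) (f y) (f z)) (hwx : w ≠ x)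
    (hw₃ : 0 ≤ orient (f y) (f z) (f w)) (hw₁ : 0 < orient (f x) (f y) (f w))
    (hw₂ : 0 < orient (f z) (f x) (f w))
    (hmax : ∀ u, u ≠ x → f u ∈ closedTriangle (f x) (f y) (f z) →
      orient (f y) (f z) (f u) ≤ orient (f y) (f z) (f w)) : G.Adj x w := by
  have hlt : orient (f y) (f z) (f w) < orient (f y) (f z) (f x) := by
    rw [← orient_rotate (f x)]
    linarith [orient_add_orient_add_orient (f x) (f y) (f z) (f w)]
  have hopen {X : ℝ × ℝ} (hX : X ∈ openSegment ℝ (f x) (f w)) :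
      0 < orient (f x) (f y) X ∧ 0 < orient (f z) (f x) X ∧
        orient (f y) (f z) (f w) < orient (f y) (f z) X :=
    ⟨lt_orient_of_mem_openSegment (orient_self_left _ _).ge hw₁ hX,
      lt_orient_of_mem_openSegment (orient_self_right _ _).ge hw₂ hX,
      lt_orient_of_mem_openSegment le_rfl hlt (openSegment_symm ℝ (f x) _ ▸ hX)⟩
  refine hS.adj hP hwx.symm (fun u hux huw hu => ?_) (fun c d hcd hc hd => ?_)
  · obtain ⟨hu₁, hu₂, hu₃⟩ := hopen <| mem_openSegment_of_ne_left_right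
      (hP.injective.ne hux.symm) (hP.injective.ne huw.symm) hu
    exact hu₃.not_ge (hmax u hux ⟨hu₁.le, hw₃.trans hu₃.le, hu₂.le⟩)
  refine Set.disjoint_left.mpr fun X hX hXcd => ?_
  obtain ⟨hX₁, hX₂, hX₃⟩ := hopen hX
  have hfar {u v : V} (huv : G.Adj u v) (hu : u ≠ x) (hv : v ≠ x)
      (hX : X ∈ segment ℝ (f u) (f v)) (h : orient (f y) (f z) X ≤ orient (f y) (f z) (f u)) :
      False := by
    have hoff {Z : ℝ × ℝ} (hZ : orient (f y) (f z) Z = 0) : Z ∉ segment ℝ X (f u) := fun hZu =>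
      (hw₃.trans_lt hX₃).not_ge (hZ ▸ le_orient_of_mem_segment le_rfl h hZu)
    obtain ⟨hu₁, hu₂⟩ := hP.orient_nonneg_of_mem_segment hxy hxz hD huv hu hv hX hX₁ hX₂
      (hw₃.trans hX₃.le) h (hoff (orient_self_left _ _)) (hoff (orient_self_right _ _))
    exact (hX₃.trans_le h).not_ge (hmax u hu ⟨hu₁, (hw₃.trans hX₃.le).trans h, hu₂⟩)
  have hcx : c ≠ x := fun h => (ne_of_orient_ne_zero hc.ne').1 (h ▸ rfl)
  have hdx : d ≠ x := fun h => (ne_of_orient_ne_zero hd.ne).1 (h ▸ rfl)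
  rcases orient_le_or_le_of_mem_segment (f y) (f z) hXcd with h | h
  · exact hfar hcd hcx hdx hXcd h
  · exact hfar hcd.symm hdx hcx (segment_symm ℝ (f c) _ ▸ hXcd) h

namespace IsConvexCorner

lemma isVacant [Finite V] (hP : IsPlanarDrawing G f) (hS : IsSaturated G f)
    (h : IsConvexCorner G f x y z) : IsVacant f x y z := by
  intro w₀ hx₀ hy₀ hz₀ hw₀
  let S : Set V := {w | w ≠ x ∧ w ≠ y ∧ w ≠ z ∧ f w ∈ closedTriangle (f x) (f y) (f z)}
  obtain ⟨w, ⟨hwx, hwy, hwz, hw⟩, hmax⟩ := S.toFinite.exists_maximalFor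
    (fun w => orient (f y) (f z) (f w)) S ⟨w₀, hx₀, hy₀, hz₀, hw₀⟩
  obtain ⟨hw₁, hw₂⟩ := hP.orient_pos_of_mem_closedTriangle h.adj_left h.adj_right h.orient_pos
    hwx hwy hwz hw
  refine h.not_between w (hS.adj_of_forall_orient_le hP h.adj_left h.adj_right h.orient_pos
    hwx hw.2.1 hw₁ hw₂ fun u hux hu => ?_) ⟨hw₁, by rwa [← orient_rotate]⟩
  by_cases huy : u = y
  · simpa [huy] using hw.2.1
  by_cases huz : u = z
  · simpa [huz] using hw.2.1
  exact (le_total _ _).elim id (hmax (j := u) ⟨hux, huy, huz, hu⟩)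

lemma orient_pos_of_mem_openSegment (h : IsConvexCorner G f x y z) {X : ℝ × ℝ}
    (hX : X ∈ openSegment ℝ (f y) (f z)) :
    0 < orient (f x) (f y) X ∧ 0 < orient (f z) (f x) X := by
  have hy : 0 < orient (f z) (f x) (f y) := by
    rw [orient_rotate]
    exact h.orient_pos
  exact ⟨lt_orient_of_mem_openSegment (orient_self_right _ _).ge h.orient_pos hX,
    lt_orient_of_mem_openSegment (orient_self_left _ _).ge hy (openSegment_symm ℝ (f y) _ ▸ hX)⟩

lemma disjoint_openSegment (hP : IsPlanarDrawing G f) (h : IsConvexCorner G f x y z)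
    (hE : IsVacant f x y z) (hcd : G.Adj c d) (hc : 0 < orient (f y) (f z) (f c))
    (hd : orient (f y) (f z) (f d) < 0) :
    Disjoint (openSegment ℝ (f y) (f z)) (segment ℝ (f c) (f d)) := by
  refine Set.disjoint_left.mpr fun X hX hXcd => ?_
  obtain ⟨hX₁, hX₂⟩ := h.orient_pos_of_mem_openSegment hX
  have hX₃ := orient_eq_zero_of_mem_segment (openSegment_subset_segment _ _ _ hX)
  have hc' := ne_of_orient_ne_zero hc.ne'
  have hd' := ne_of_orient_ne_zero hd.ne
  have hdx : d ≠ x := by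
    rintro rfl
    exact hd.not_gt (by rw [← orient_rotate]; exact h.orient_pos)
  by_cases hcx : c = x
  · subst hcx
    refine h.not_between d hcd ⟨?_, ?_⟩
    · exact (orient_le_or_le_of_mem_segment _ _ hXcd).elim
        (fun h => absurd (h.trans (orient_self_left _ _).le) hX₁.not_ge) hX₁.trans_le
    · rw [← orient_rotate]
      exact (orient_le_or_le_of_mem_segment _ _ hXcd).elim
        (fun h => absurd (h.trans (orient_self_right _ _).le) hX₂.not_ge) hX₂.trans_le
  have hoff {u : V} (hcu : f c ≠ f u) (hdu : f d ≠ f u) : f u ∉ segment ℝ X (f c) := fun hu =>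
    hP.notMem_segment hcd (fun h => hcu (h ▸ rfl)) (fun h => hdu (h ▸ rfl)) <|
      (convex_segment _ _).segment_subset hXcd (left_mem_segment _ _ _) hu
  obtain ⟨hc₁, hc₂⟩ := hP.orient_nonneg_of_mem_segment h.adj_left h.adj_right h.orient_pos hcd hcx
    hdx hXcd hX₁ hX₂ hX₃.ge (hX₃.trans_le hc.le) (hoff hc'.1 hd'.1) (hoff hc'.2 hd'.2)
  exact hE c hcx (fun h => hc'.1 (h ▸ rfl)) (fun h => hc'.2 (h ▸ rfl)) ⟨hc₁, hc.le, hc₂⟩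

lemma adj [Finite V] (hP : IsPlanarDrawing G f) (hS : IsSaturated G f)
    (h : IsConvexCorner G f x y z) : G.Adj y z := by
  have hE := h.isVacant hP hS
  have hyz : y ≠ z := fun hyz => (ne_of_orient_ne_zero h.orient_pos.ne').2 (hyz ▸ rfl)
  refine hS.adj hP hyz (fun u huy huz hu => ?_) fun c d => h.disjoint_openSegment hP hE
  obtain ⟨hu₁, hu₂⟩ := h.orient_pos_of_mem_openSegment <| mem_openSegment_of_ne_left_right
    (hP.injective.ne huy.symm) (hP.injective.ne huz.symm) hu
  have hux : u ≠ x := fun hux => (ne_of_orient_ne_zero hu₁.ne').1 (hux ▸ rfl)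
  exact hE u hux huy huz ⟨hu₁.le, (orient_eq_zero_of_mem_segment hu).ge, hu₂.le⟩

lemma isFace [Finite V] (hP : IsPlanarDrawing G f) (hS : IsSaturated G f)
    (h : IsConvexCorner G f x y z) : IsFace G f x y z :=
  have hE := h.isVacant hP hS
  have hyz := h.adj hP hS
  ⟨h, hE.rotate.isConvexCorner hP hyz h.adj_right.symm h.adj_left.symm
      (by rw [← orient_rotate]; exact h.orient_pos),
    hE.rotate.rotate.isConvexCorner hP h.adj_right.symm h.adj_left hyz.symm
      (by rw [orient_rotate]; exact h.orient_pos)⟩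

end IsConvexCorner

namespace IsPlanarDrawing

lemma eq_of_isFace (hP : IsPlanarDrawing G f) (hz : IsFace G f x y z) (hw : IsFace G f x y w) :
    z = w := by
  refine hP.eq_of_sameRay hz.1.adj_right hw.1.adj_right <|
    sameRay_of_orient_eq_zero hz.1.orient_pos hw.1.orient_pos ?_
  rcases lt_trichotomy (orient (f x) (f z) (f w)) 0 with h | h | h
  · exact absurd ⟨hw.1.orient_pos, by rw [orient_swap]; linarith⟩
      (hz.1.not_between w hw.1.adj_right)
  · exact h
  · exact absurd ⟨hz.1.orient_pos, h⟩ (hw.1.not_between z hz.1.adj_right)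

lemma isTriangleSystem (hP : IsPlanarDrawing G f) : IsTriangleSystem G (IsFace G f) where
  rot h := h.rotate
  adj h := h.1.adj_left
  unique h h' := hP.eq_of_isFace h h'

end IsPlanarDrawing

end Corners

/-! ### Neighbours in half-planes -/

section HalfPlane

variable {V : Type*} {G : SimpleGraph V} {f : V → ℝ × ℝ} {x c d : V} {P : ℝ × ℝ}

lemma isCompact_segment {E : Type*} [NormedAddCommGroup E] [NormedSpace ℝ E] (a b : E) :
    IsCompact (segment ℝ a b) := by
  rw [segment_eq_image_lineMap]
  exact isCompact_Icc.image AffineMap.lineMap_continuous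

lemma exists_mem_segment_forall_mem_eq {E : Type*} [NormedAddCommGroup E] [NormedSpace ℝ E]
    {K : Set E} (hK : IsClosed K) (a : E) {b : E} (hb : b ∈ K) :
    ∃ p ∈ segment ℝ a b, p ∈ K ∧ ∀ q ∈ segment ℝ a p, q ∈ K → q = p := by
  obtain ⟨p, ⟨hpab, hpK⟩, hmin⟩ := ((isCompact_segment a b).inter_right hK).exists_isMinOn
    ⟨b, right_mem_segment _ _ _, hb⟩
    (continuous_const.dist continuous_id : Continuous (dist a)).continuousOn
  refine ⟨p, hpab, hpK, fun q hq hqK => ?_⟩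
  have hle : dist a p ≤ dist a q :=
    hmin ⟨(convex_segment _ _).segment_subset (left_mem_segment _ _ _) hpab hq, hqK⟩
  have hadd : dist a q + dist q p = dist a p := dist_add_dist_of_mem_segment hq
  exact dist_le_zero.mp (by linarith)

/-- The part of the drawing which is not incident to the vertex `x`. -/
def awayFrom (G : SimpleGraph V) (f : V → ℝ × ℝ) (x : V) : Set (ℝ × ℝ) :=
  {Q | (∃ u, u ≠ x ∧ f u = Q) ∨ ∃ c d, G.Adj c d ∧ c ≠ x ∧ d ≠ x ∧ Q ∈ segment ℝ (f c) (f d)}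

lemma isClosed_awayFrom [Finite V] (G : SimpleGraph V) (f : V → ℝ × ℝ) (x : V) :
    IsClosed (awayFrom G f x) := by
  have h : awayFrom G f x = f '' {u | u ≠ x} ∪
      ⋃ p ∈ {p : V × V | G.Adj p.1 p.2 ∧ p.1 ≠ x ∧ p.2 ≠ x}, segment ℝ (f p.1) (f p.2) := by
    ext Q
    simp [awayFrom, and_assoc]
  rw [h]
  exact (Set.toFinite _).isClosed.union
    ((Set.toFinite _).isClosed_biUnion fun _ _ => (isCompact_segment _ _).isClosed)

lemma awayFrom_comp_linearEquiv (e : (ℝ × ℝ) ≃ₗ[ℝ] ℝ × ℝ) :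
    awayFrom G (e ∘ f) x = e '' awayFrom G f x := by
  ext Q
  obtain ⟨Q, rfl⟩ := e.surjective Q
  rw [e.injective.mem_set_image]
  simp only [awayFrom, Set.mem_ofPred_eq, Function.comp_apply, e.injective.eq_iff,
    segment_linearEquiv_apply, e.injective.mem_set_image]

/-- An edge crossing `xw` into the triangle `xPd` has no endpoint there, so it would have to leave
through `xP` or through the edge `cd`. -/
lemma IsPlanarDrawing.disjoint_openSegment_of_forall_orient_nonneg (hP : IsPlanarDrawing G f)
    (hcd : G.Adj c d) (hPcd : P ∈ openSegment ℝ (f c) (f d))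
    (hclear : ∀ Q ∈ segment ℝ (f x) P, Q ∈ awayFrom G f x → Q = P)
    (hD : 0 < orient (f x) P (f d)) {w e e' : V} (hw : f w ∈ closedTriangle (f x) P (f d))
    (hwP : 0 < orient (f x) P (f w))
    (hfirst : ∀ u, u ≠ x → f u ∈ closedTriangle (f x) P (f d) → 0 ≤ orient (f x) (f w) (f u))
    (hee : G.Adj e e') (he : 0 < orient (f x) (f w) (f e)) (he' : orient (f x) (f w) (f e') < 0) :
    Disjoint (openSegment ℝ (f x) (f w)) (segment ℝ (f e) (f e')) := by
  refine Set.disjoint_left.mpr fun Z hZ hZee => ?_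
  have hex : e ≠ x := fun h => (ne_of_orient_ne_zero he.ne').1 (h ▸ rfl)
  have hex' : e' ≠ x := fun h => (ne_of_orient_ne_zero he'.ne).1 (h ▸ rfl)
  have hdx : d ≠ x := fun h => (ne_of_orient_ne_zero hD.ne').1 (h ▸ rfl)
  obtain ⟨Q, hQ, hQ', hQw⟩ := exists_mem_segment_union_segment_of_notMem_closedTriangle hD hw hwP
    hZ he' (fun h => (hfirst e' hex' h).not_gt he')
  replace hQ : Q ∈ segment ℝ (f e) (f e') :=
    (convex_segment _ _).segment_subset hZee (right_mem_segment _ _ _) hQ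
  have hQd : Q ∈ segment ℝ P (f d) := by
    rcases hQ' with h | h
    · rwa [segment_symm]
    · rw [hclear Q (segment_symm ℝ P _ ▸ h) (Or.inr ⟨e, e', hee, hex, hex', hQ⟩)]
      exact left_mem_segment _ _ _
  have hQcd : Q ∈ segment ℝ (f c) (f d) := (convex_segment _ _).segment_subset
    (openSegment_subset_segment _ _ _ hPcd) (right_mem_segment _ _ _) hQd
  rcases hP.eq_or_eq_of_mem hcd hee hQcd hQ with rfl | rfl | h
  · have hQP := le_orient_of_mem_segment (orient_self_right (f x) P).ge hD.le hQd
    rcases orient_cases_of_mem_openSegment hPcd (orient_self_right (f x) P) with h | h | h <;>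
      linarith
  · have hd := le_antisymm hQw (hfirst d hdx ⟨hD.le, by simp, by simp⟩)
    exact hP.notMem_segment hee (fun h => he.ne' (h ▸ hd)) (fun h => he'.ne (h ▸ hd)) hQ
  · have hPd : orient P (f d) (f c) = 0 := by
      simpa using orient_cases_of_mem_openSegment hPcd (orient_self_left P (f d))
    have hZcd : Z ∈ segment ℝ (f c) (f d) := by
      rcases Sym2.eq_iff.mp h with ⟨rfl, rfl⟩ | ⟨rfl, rfl⟩
      · exact hZee
      · rwa [segment_symm]
    have hZd : 0 < orient P (f d) Z := lt_orient_of_mem_openSegment hw.2.1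
      (by rwa [← orient_rotate]) (openSegment_symm ℝ (f x) _ ▸ hZ)
    rcases orient_le_or_le_of_mem_segment P (f d) hZcd with h | h <;>
      linarith [orient_self_right P (f d)]

lemma IsPlanarDrawing.orient_ne_zero_of_mem_openSegment (hP : IsPlanarDrawing G f)
    (hcd : G.Adj c d) (hcx : c ≠ x) (hdx : d ≠ x) (hPcd : P ∈ openSegment ℝ (f c) (f d))
    (hPv : ∀ u, u ≠ x → f u ≠ P)
    (hclear : ∀ Q ∈ segment ℝ (f x) P, Q ∈ awayFrom G f x → Q = P) :
    orient (f x) P (f d) ≠ 0 := by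
  intro hd
  have hPcd' := openSegment_subset_segment _ _ _ hPcd
  have hxcd : f x ∉ segment ℝ (f c) (f d) := hP.notMem_segment hcd hcx.symm hdx.symm
  have hxP : f x ≠ P := fun h => hxcd (h ▸ hPcd')
  have hc : orient (f x) P (f c) = 0 := by
    simpa [hd] using orient_cases_of_mem_openSegment hPcd (orient_self_right (f x) P)
  have hvx {u : V} (hu : u ≠ x) {r : ℝ} (hur : f u = AffineMap.lineMap (f x) P r) :
      r ∉ Set.Icc (0 : ℝ) 1 := fun hr =>
    hPv u hu (hclear _ (hur ▸ lineMap_mem_segment ℝ _ _ hr) (Or.inl ⟨u, hu, rfl⟩))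
  obtain ⟨s, hs⟩ := exists_eq_lineMap_of_orient_eq_zero hxP hc
  obtain ⟨t, ht⟩ := exists_eq_lineMap_of_orient_eq_zero hxP hd
  have hs' := hvx hcx hs
  have ht' := hvx hdx ht
  have h1 : (1 : ℝ) ∈ Set.uIcc s t := by
    rwa [← lineMap_mem_segment_lineMap_iff hxP, AffineMap.lineMap_apply_one, ← hs, ← ht]
  have h0 : (0 : ℝ) ∉ Set.uIcc s t := by
    rwa [← lineMap_mem_segment_lineMap_iff hxP, AffineMap.lineMap_apply_zero, ← hs, ← ht]
  simp only [Set.mem_uIcc, Set.mem_Icc] at h0 h1 hs' ht'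
  grind

namespace IsSaturated

lemma adj_of_forall_mem_awayFrom (hS : IsSaturated G f) (hP : IsPlanarDrawing G f) {u : V}
    (hux : u ≠ x) (hclear : ∀ Q ∈ segment ℝ (f x) (f u), Q ∈ awayFrom G f x → Q = f u) :
    G.Adj x u := by
  refine hS.adj hP hux.symm (fun c hcx hcu hc => ?_) (fun c d hcd hc hd => ?_)
  · exact hcu (hP.injective (hclear _ hc (Or.inl ⟨c, hcx, rfl⟩)))
  refine Set.disjoint_left.mpr fun X hX hXcd => ?_
  have hc' := ne_of_orient_ne_zero hc.ne'
  have hd' := ne_of_orient_ne_zero hd.ne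
  have hXu : X = f u := hclear X (openSegment_subset_segment _ _ _ hX)
    (Or.inr ⟨c, d, hcd, fun h => hc'.1 (h ▸ rfl), fun h => hd'.1 (h ▸ rfl), hXcd⟩)
  exact hP.notMem_segment hcd (fun h => hc'.2 (h ▸ rfl)) (fun h => hd'.2 (h ▸ rfl)) (hXu ▸ hXcd)

/-- Among the vertices in the triangle `xPd`, take the first one met by a ray rotating around `x`
from `P` towards `d`, and on this ray the one closest to `x`. -/
lemma exists_adj_of_orient_pos [Finite V] (hS : IsSaturated G f) (hP : IsPlanarDrawing G f)
    (hcd : G.Adj c d) (hdx : d ≠ x) (hPcd : P ∈ openSegment ℝ (f c) (f d))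
    (hPv : ∀ u, u ≠ x → f u ≠ P)
    (hclear : ∀ Q ∈ segment ℝ (f x) P, Q ∈ awayFrom G f x → Q = P)
    (hD : 0 < orient (f x) P (f d)) :
    ∃ w, G.Adj x w ∧ ∃ Y ∈ segment ℝ P (f d), f w ∈ segment ℝ (f x) Y := by
  let U : Set V := {u | u ≠ x ∧ f u ∈ closedTriangle (f x) P (f d)}
  have hD' : 0 < orient P (f d) (f x) := by rwa [← orient_rotate]
  have hdU : d ∈ U := ⟨hdx, hD.le, by simp, by simp⟩
  have hUpos : ∀ u ∈ U, 0 < orient (f x) P (f u) := fun u hu => hu.2.1.lt_of_ne' fun h =>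
    hPv u hu.1 <| hclear _ (segment_symm ℝ P _ ▸
      mem_segment_of_orient_eq_zero hD' h hu.2.2.1 hu.2.2.2) (Or.inl ⟨u, hu.1, rfl⟩)
  obtain ⟨w, hwU, hw⟩ := exists_forall_orient_nonneg U.toFinite ⟨d, hdU⟩ hD hUpos
  have hwP := hUpos w hwU
  refine ⟨w, hS.adj hP hwU.1.symm (fun u hux huw hu => ?_) (fun e e' hee he he' => ?_),
    exists_mem_segment_of_mem_closedTriangle hD hwP hwU.2⟩
  · have huU : u ∈ U := ⟨hux, (convex_closedTriangle _ _ _).segment_subset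
      ⟨by simp, hD'.le, by simp⟩ hwU.2 hu⟩
    exact huw (hP.injective (eq_right_of_le_orient_of_mem_segment (by simpa) hu
      ((hw u huU).2 (orient_eq_zero_of_mem_segment hu))))
  · exact hP.disjoint_openSegment_of_forall_orient_nonneg hcd hPcd hclear hD hwU.2 hwP
      (fun u hux hu => (hw u ⟨hux, hu⟩).1) hee he he'

lemma exists_adj_of_mem_openSegment [Finite V] (hS : IsSaturated G f) (hP : IsPlanarDrawing G f)
    (hcd : G.Adj c d) (hcx : c ≠ x) (hdx : d ≠ x) (hPcd : P ∈ openSegment ℝ (f c) (f d))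
    (hPv : ∀ u, u ≠ x → f u ≠ P)
    (hclear : ∀ Q ∈ segment ℝ (f x) P, Q ∈ awayFrom G f x → Q = P) :
    ∃ w, G.Adj x w ∧ ∃ Y ∈ segment ℝ P (f d), f w ∈ segment ℝ (f x) Y := by
  have hD := hP.orient_ne_zero_of_mem_openSegment hcd hcx hdx hPcd hPv hclear
  rcases hD.lt_or_gt with hD | hD
  · let e : (ℝ × ℝ) ≃ₗ[ℝ] ℝ × ℝ := LinearEquiv.prodComm ℝ ℝ ℝ
    have hD' : 0 < orient ((e ∘ f) x) (e P) ((e ∘ f) d) := by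
      have h : orient ((e ∘ f) x) (e P) ((e ∘ f) d) = -orient (f x) P (f d) :=
        orient_prodSwap _ _ _
      linarith
    have hPcd' : e P ∈ openSegment ℝ ((e ∘ f) c) ((e ∘ f) d) :=
      (image_openSegment ℝ e.toLinearMap.toAffineMap _ _).subset ⟨P, hPcd, rfl⟩
    obtain ⟨w, hw, Y, hY, hwY⟩ := (hS.comp_linearEquiv e).exists_adj_of_orient_pos
      (hP.comp_linearEquiv e) hcd hdx hPcd' (fun u hux h => hPv u hux (e.injective h)) (by
        rw [Function.comp_apply, segment_linearEquiv_apply, awayFrom_comp_linearEquiv]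
        rintro _ ⟨Q, hQ, rfl⟩ hQ'
        rw [e.injective.mem_set_image] at hQ'
        rw [hclear Q hQ hQ']) hD'
    rw [Function.comp_apply, segment_linearEquiv_apply] at hY
    obtain ⟨Y, hY, rfl⟩ := hY
    rw [Function.comp_apply, Function.comp_apply, segment_linearEquiv_apply,
      e.injective.mem_set_image] at hwY
    exact ⟨w, hw, Y, hY, hwY⟩
  · exact hS.exists_adj_of_orient_pos hP hcd hdx hPcd hPv hclear hD

lemma exists_adj_orient_pos [Finite V] (hS : IsSaturated G f) (hP : IsPlanarDrawing G f)
    {E : ℝ × ℝ} {w₀ : V} (hw₀ : 0 < orient (f x) E (f w₀)) :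
    ∃ w, G.Adj x w ∧ 0 < orient (f x) E (f w) := by
  have hne {u : V} (hu : 0 < orient (f x) E (f u)) : u ≠ x :=
    fun h => (ne_of_orient_ne_zero hu.ne').1 (h ▸ rfl)
  obtain ⟨P, hPs, hPK, hclear⟩ := exists_mem_segment_forall_mem_eq (isClosed_awayFrom G f x) (f x)
    (Or.inl ⟨w₀, hne hw₀, rfl⟩ : f w₀ ∈ awayFrom G f x)
  have hPE (h : P ≠ f x) : 0 < orient (f x) E P := orient_pos_of_mem_segment_of_ne hw₀ hPs h
  by_cases hPv : ∃ u, u ≠ x ∧ f u = P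
  · obtain ⟨u, hux, rfl⟩ := hPv
    exact ⟨u, hS.adj_of_forall_mem_awayFrom hP hux hclear, hPE (hP.injective.ne hux)⟩
  push Not at hPv
  obtain ⟨u, hux, hu⟩ | ⟨c, d, hcd, hcx, hdx, hPcd⟩ := hPK
  · exact absurd hu (hPv u hux)
  have hPx : P ≠ f x := fun h => hP.notMem_segment hcd hcx.symm hdx.symm (h ▸ hPcd)
  have hPcd' := mem_openSegment_of_ne_left_right (hPv c hcx) (hPv d hdx) hPcd
  have hside {c d : V} (hcd : G.Adj c d) (hcx : c ≠ x) (hdx : d ≠ x)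
      (hPcd : P ∈ openSegment ℝ (f c) (f d)) (hd : orient (f x) E P ≤ orient (f x) E (f d)) :
      ∃ w, G.Adj x w ∧ 0 < orient (f x) E (f w) := by
    obtain ⟨w, hxw, Y, hY, hwY⟩ := hS.exists_adj_of_mem_openSegment hP hcd hcx hdx hPcd hPv hclear
    have hYE := (hPE hPx).trans_le (le_orient_of_mem_segment le_rfl hd hY)
    exact ⟨w, hxw, orient_pos_of_mem_segment_of_ne hYE hwY (hP.injective.ne hxw.ne')⟩
  rcases orient_le_or_le_of_mem_segment (f x) E hPcd with hc | hd
  · exact hside hcd.symm hdx hcx (openSegment_symm ℝ (f c) _ ▸ hPcd') hc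
  · exact hside hcd hcx hdx hPcd' hd

end IsSaturated

end HalfPlane

/-! ### Sorting neighbours by angle -/

section Angle

variable {X E P Q : ℝ × ℝ}

lemma norm_mul_norm_mul_sin_arg_sub (z w : ℂ) :
    ‖z‖ * ‖w‖ * Real.sin (w.arg - z.arg) = z.re * w.im - z.im * w.re := by
  rw [Real.sin_sub, ← Complex.norm_mul_cos_arg z, ← Complex.norm_mul_sin_arg z,
    ← Complex.norm_mul_cos_arg w, ← Complex.norm_mul_sin_arg w]
  ring

lemma sin_pos_iff_of_abs_lt_two_pi {θ : ℝ} (hθ : |θ| < 2 * Real.pi) :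
    0 < Real.sin θ ↔ 0 < θ ∧ θ < Real.pi ∨ θ < -Real.pi := by
  rw [abs_lt] at hθ
  constructor
  · contrapose!
    rintro ⟨hpos, hneg⟩
    rcases le_or_gt θ 0 with h | h
    · exact Real.sin_nonpos_of_nonpos_of_neg_pi_le h hneg
    · rw [← neg_nonneg, ← Real.sin_sub_pi]
      exact Real.sin_nonneg_of_nonneg_of_le_pi (by linarith [hpos h]) (by linarith)
  · rintro (h | h)
    · exact Real.sin_pos_of_pos_of_lt_pi h.1 h.2
    · rw [← Real.sin_add_two_pi]
      exact Real.sin_pos_of_pos_of_lt_pi (by linarith) (by linarith)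

/-- The coordinates of `P` in the orthogonal frame with origin `X` whose first axis is directed
towards `E`, as a complex number. -/
def frame (X E P : ℝ × ℝ) : ℂ :=
  ⟨(E.1 - X.1) * (P.1 - X.1) + (E.2 - X.2) * (P.2 - X.2), orient X E P⟩

/-- The angle at `X` from the direction of `E` counterclockwise to the direction of `P`, taken in
`(-π, π]`. Its value is `0` if one of the points `E` and `P` is equal to `X`. -/
noncomputable def angleAt (X E P : ℝ × ℝ) : ℝ := (frame X E P).arg

lemma angleAt_le_pi (X E P : ℝ × ℝ) : angleAt X E P ≤ Real.pi := Complex.arg_le_pi _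

lemma neg_pi_lt_angleAt (X E P : ℝ × ℝ) : -Real.pi < angleAt X E P := Complex.neg_pi_lt_arg _

lemma dist_sq_pos (hE : E ≠ X) : 0 < (E.1 - X.1) ^ 2 + (E.2 - X.2) ^ 2 := by
  by_contra! h
  have h₁ : E.1 - X.1 = 0 := by nlinarith
  have h₂ : E.2 - X.2 = 0 := by nlinarith
  exact hE (Prod.ext (sub_eq_zero.mp h₁) (sub_eq_zero.mp h₂))

lemma frame_ne_zero (hE : E ≠ X) (hP : P ≠ X) : frame X E P ≠ 0 := by
  intro h
  have hre : (E.1 - X.1) * (P.1 - X.1) + (E.2 - X.2) * (P.2 - X.2) = 0 := congrArg Complex.re h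
  have him : orient X E P = 0 := congrArg Complex.im h
  refine (mul_pos (dist_sq_pos hE) (dist_sq_pos hP)).ne' ?_
  rw [orient] at him
  linear_combination ((E.1 - X.1) * (P.1 - X.1) + (E.2 - X.2) * (P.2 - X.2)) * hre +
    ((E.1 - X.1) * (P.2 - X.2) - (E.2 - X.2) * (P.1 - X.1)) * him

lemma orient_pos_iff_angleAt (hE : E ≠ X) (hP : P ≠ X) (hQ : Q ≠ X) :
    0 < orient X P Q ↔
      0 < angleAt X E Q - angleAt X E P ∧ angleAt X E Q - angleAt X E P < Real.pi ∨
        angleAt X E Q - angleAt X E P < -Real.pi := by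
  have hsin : ‖frame X E P‖ * ‖frame X E Q‖ * Real.sin (angleAt X E Q - angleAt X E P) =
      ((E.1 - X.1) ^ 2 + (E.2 - X.2) ^ 2) * orient X P Q := by
    rw [angleAt, angleAt, norm_mul_norm_mul_sin_arg_sub]
    simp only [frame, orient]
    ring
  have hnorm : 0 < ‖frame X E P‖ * ‖frame X E Q‖ :=
    mul_pos (norm_pos_iff.mpr (frame_ne_zero hE hP)) (norm_pos_iff.mpr (frame_ne_zero hE hQ))
  rw [← mul_pos_iff_of_pos_left (dist_sq_pos hE), ← hsin, mul_pos_iff_of_pos_left hnorm,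
    sin_pos_iff_of_abs_lt_two_pi]
  rw [abs_lt]
  constructor <;> linarith [angleAt_le_pi X E P, angleAt_le_pi X E Q, neg_pi_lt_angleAt X E P,
    neg_pi_lt_angleAt X E Q]

lemma sameRay_of_angleAt_eq (hE : E ≠ X) (h : angleAt X E P = angleAt X E Q) :
    SameRay ℝ (P -ᵥ X) (Q -ᵥ X) := by
  let T : ℝ × ℝ →ₗ[ℝ] ℂ :=
    LinearMap.mulLeft ℝ (⟨E.1 - X.1, -(E.2 - X.2)⟩ : ℂ) ∘ₗ Complex.equivRealProdLm.symm
  have hT (R : ℝ × ℝ) : T (R -ᵥ X) = frame X E R := by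
    apply Complex.ext <;> simp [T, frame, orient] <;> ring
  have hTinj : Function.Injective T := by
    refine (mul_right_injective₀ fun h0 => (dist_sq_pos hE).ne' ?_).comp
      Complex.equivRealProdLm.symm.injective
    have hre : E.1 - X.1 = 0 := congrArg Complex.re h0
    have him : -(E.2 - X.2) = 0 := congrArg Complex.im h0
    linear_combination (E.1 - X.1) * hre - (E.2 - X.2) * him
  rw [← hTinj.sameRay_map_iff, hT, hT, Complex.sameRay_iff]
  exact Or.inr (Or.inr h)

lemma angleAt_self (X E : ℝ × ℝ) : angleAt X E E = 0 := by
  rw [angleAt, Complex.arg_eq_zero_iff]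
  exact ⟨add_nonneg (mul_self_nonneg _) (mul_self_nonneg _), orient_self_right X E⟩

lemma angleAt_two_smul_sub (hP : P ≠ X) : angleAt X ((2 : ℝ) • X - P) P = Real.pi := by
  have hpos := dist_sq_pos hP
  rw [angleAt, Complex.arg_eq_pi_iff]
  constructor <;> simp only [frame, orient, Prod.fst_sub, Prod.snd_sub, Prod.smul_fst,
    Prod.smul_snd, smul_eq_mul] <;> linarith

lemma toLex_lt_toLex_iff_angleAt (hPX : P ≠ X) :
    toLex P < toLex X ↔ -(Real.pi / 2) < angleAt X (X - (1, 0)) P ∧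
      angleAt X (X - (1, 0)) P ≤ Real.pi / 2 := by
  rw [angleAt, Complex.neg_pi_div_two_lt_arg_iff, Complex.arg_le_pi_div_two_iff,
    Prod.Lex.toLex_lt_toLex]
  have hre : (frame X (X - (1, 0)) P).re = X.1 - P.1 := by simp [frame]
  have him : (frame X (X - (1, 0)) P).im = X.2 - P.2 := by simp [frame, orient]
  have hne : ¬ (P.1 = X.1 ∧ P.2 = X.2) := fun h => hPX (Prod.ext h.1 h.2)
  rw [hre, him]
  grind

end Angle

section Sorting

variable {α β : Type*} [LinearOrder β] {κ : α → β} {ℓ : List α} {m : α}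

lemma exists_list_pairwise_lt (N : Finset α) (hκ : Set.InjOn κ N) :
    ∃ ℓ : List α, (∀ y, y ∈ ℓ ↔ y ∈ N) ∧ ℓ.Pairwise (κ · < κ ·) := by
  let r : α → α → Prop := fun y z => κ y ≤ κ z
  classical
  have hmem (y : α) : y ∈ N.toList.insertionSort r ↔ y ∈ N := by simp
  have hsort : (N.toList.insertionSort r).Pairwise r := List.pairwise_insertionSort r _
  have hnodup : (N.toList.insertionSort r).Nodup :=
    (List.perm_insertionSort r _).nodup_iff.mpr N.nodup_toList
  refine ⟨_, hmem, (hsort.and hnodup).imp_of_mem fun {y z} hy hz h => ?_⟩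
  exact h.1.lt_of_ne fun h' => h.2 (hκ ((hmem y).mp hy) ((hmem z).mp hz) h')

lemma isChain_of_pairwise_lt {R : α → α → Prop} (hℓ : ℓ.Pairwise (κ · < κ ·))
    (h : ∀ y ∈ ℓ, ∀ z ∈ ℓ, κ y < κ z → (∀ w ∈ ℓ, κ y < κ w → ¬ κ w < κ z) → R y z) :
    ℓ.IsChain R := by
  induction ℓ with
  | nil => exact List.isChain_nil
  | cons a l ih =>
    obtain ⟨ha, hl⟩ := List.pairwise_cons.mp hℓ
    refine List.isChain_cons.mpr ⟨fun b hb => ?_, ih hl fun y hy z hz hyz hw => ?_⟩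
    · have hbl := List.mem_of_mem_head? hb
      refine h a (by simp) b (by simp [hbl]) (ha b hbl) fun w hw haw hwb => ?_
      obtain ⟨l, rfl⟩ := List.head?_eq_some_iff.mp hb
      simp only [List.mem_cons] at hw
      rcases hw with rfl | rfl | hw
      · exact haw.false
      · exact hwb.false
      · exact ((List.pairwise_cons.mp hl).1 w hw).asymm hwb
    · refine h y (by simp [hy]) z (by simp [hz]) hyz fun w hwl hyw => ?_
      rcases List.mem_cons.mp hwl with rfl | hwl
      · exact absurd hyw (ha y hy).asymm
      · exact hw w hwl hyw

lemma head?_eq_some_of_pairwise_lt (hℓ : ℓ.Pairwise (κ · < κ ·)) (hm : m ∈ ℓ)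
    (h : ∀ w ∈ ℓ, κ m ≤ κ w) : ℓ.head? = some m := by
  cases ℓ with
  | nil => simp at hm
  | cons a l =>
    rcases List.mem_cons.mp hm with rfl | hm
    · rfl
    · exact absurd (h a (by simp)) (List.rel_of_pairwise_cons hℓ hm).not_ge

lemma getLast?_eq_some_of_pairwise_lt (hℓ : ℓ.Pairwise (κ · < κ ·)) (hm : m ∈ ℓ)
    (h : ∀ w ∈ ℓ, κ w ≤ κ m) : ℓ.getLast? = some m := by
  rw [← List.head?_reverse]
  exact head?_eq_some_of_pairwise_lt (κ := OrderDual.toDual ∘ κ) (List.pairwise_reverse.mpr hℓ)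
    (by simpa using hm) (by simpa using h)

end Sorting

section Fan

variable {V : Type*} {G : SimpleGraph V} {f : V → ℝ × ℝ} {x y z a b c v : V} {E : ℝ × ℝ}

lemma IsPlanarDrawing.eq_of_angleAt_eq (hP : IsPlanarDrawing G f) (hE : E ≠ f x)
    (hy : G.Adj x y) (hz : G.Adj x z) (h : angleAt (f x) E (f y) = angleAt (f x) E (f z)) :
    y = z :=
  hP.eq_of_sameRay hy hz (sameRay_of_angleAt_eq hE h)

lemma IsConvexCorner.of_angleAt (hf : Function.Injective f) (hE : E ≠ f x) (hy : G.Adj x y)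
    (hz : G.Adj x z) (hyz : angleAt (f x) E (f y) < angleAt (f x) E (f z))
    (hgap : angleAt (f x) E (f z) - angleAt (f x) E (f y) < Real.pi)
    (hbetween : ∀ w, G.Adj x w → angleAt (f x) E (f y) < angleAt (f x) E (f w) →
      ¬ angleAt (f x) E (f w) < angleAt (f x) E (f z)) : IsConvexCorner G f x y z := by
  have hpos {u w : V} (hu : G.Adj x u) (hw : G.Adj x w) :=
    orient_pos_iff_angleAt hE (hf.ne hu.ne') (hf.ne hw.ne')
  refine ⟨hy, hz, (hpos hy hz).mpr (Or.inl ⟨by linarith, hgap⟩), fun w hw ⟨hyw, hwz⟩ => ?_⟩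
  rw [hpos hy hw] at hyw
  rw [hpos hw hz] at hwz
  rcases hyw with hyw | hyw <;> rcases hwz with hwz | hwz
  · exact hbetween w hw (by linarith) (by linarith)
  all_goals linarith

lemma IsConvexCorner.of_forall_angleAt_le (hf : Function.Injective f) (hE : E ≠ f x)
    (hy : G.Adj x y) (hz : G.Adj x z) (hv : G.Adj x v) (hyv : 0 < orient (f x) (f y) (f v))
    (hmax : ∀ w, G.Adj x w → angleAt (f x) E (f w) ≤ angleAt (f x) E (f y))
    (hmin : ∀ w, G.Adj x w → angleAt (f x) E (f z) ≤ angleAt (f x) E (f w)) :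
    IsConvexCorner G f x y z := by
  have hpos {u w : V} (hu : G.Adj x u) (hw : G.Adj x w) :=
    orient_pos_iff_angleAt hE (hf.ne hu.ne') (hf.ne hw.ne')
  have hyz : 0 < orient (f x) (f y) (f z) := by
    rw [hpos hy hv] at hyv
    rw [hpos hy hz]
    right
    rcases hyv with hyv | hyv <;> linarith [hmax v hv, hmin v hv]
  refine ⟨hy, hz, hyz, fun w hw ⟨hyw, hwz⟩ => ?_⟩
  rw [hpos hy hw] at hyw
  rw [hpos hw hz] at hwz
  rcases hyw with hyw | hyw
  · linarith [hmax w hw]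
  rcases hwz with hwz | hwz
  · linarith [hmin w hw]
  linarith [angleAt_le_pi (f x) E (f y), neg_pi_lt_angleAt (f x) E (f z)]

/-- The segment from `a` to `b` is an edge of the convex hull of the vertices, traversed
counterclockwise; no other vertex lies on its line. -/
structure IsHullEdge (f : V → ℝ × ℝ) (a b : V) : Prop where
  ne : a ≠ b
  orient_pos : ∀ w, w ≠ a → w ≠ b → 0 < orient (f a) (f b) (f w)

namespace IsSaturated

lemma exists_isFan [Finite V] (hS : IsSaturated G f) (hP : IsPlanarDrawing G f) (hE : E ≠ f x)
    {N : Set V} (hN : ∀ y ∈ N, G.Adj x y)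
    (hblock : ∀ y ∈ N, ∀ z ∈ N, ∀ w, G.Adj x w →
      angleAt (f x) E (f y) < angleAt (f x) E (f w) →
      angleAt (f x) E (f w) < angleAt (f x) E (f z) → w ∈ N)
    (hgap : ∀ y ∈ N, ∀ z ∈ N, (∀ w, G.Adj x w →
      angleAt (f x) E (f y) < angleAt (f x) E (f w) →
        ¬ angleAt (f x) E (f w) < angleAt (f x) E (f z)) →
      angleAt (f x) E (f z) - angleAt (f x) E (f y) < Real.pi) :
    ∃ ℓ, IsFan (IsFace G f) x N ℓ ∧
      ℓ.Pairwise fun y z => angleAt (f x) E (f y) < angleAt (f x) E (f z) := by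
  have hmemN (y : V) : y ∈ N.toFinite.toFinset ↔ y ∈ N := N.toFinite.mem_toFinset
  obtain ⟨ℓ, hmem, hsort⟩ := exists_list_pairwise_lt (κ := fun y => angleAt (f x) E (f y))
    N.toFinite.toFinset fun y hy z hz h =>
      hP.eq_of_angleAt_eq hE (hN y ((hmemN y).mp hy)) (hN z ((hmemN z).mp hz)) h
  simp only [hmemN] at hmem
  refine ⟨ℓ, ⟨hsort.imp fun h e => h.ne (congrArg (fun y => angleAt (f x) E (f y)) e), hmem,
    isChain_of_pairwise_lt hsort fun y hy z hz hyz hcons => ?_⟩, hsort⟩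
  rw [hmem] at hy hz
  have hbetween (w : V) (hw : G.Adj x w) (hyw : angleAt (f x) E (f y) < angleAt (f x) E (f w)) :
      ¬ angleAt (f x) E (f w) < angleAt (f x) E (f z) := fun hwz =>
    hcons w ((hmem w).mpr (hblock y hy z hz w hw hyw hwz)) hyw hwz
  exact IsConvexCorner.isFace hP hS (.of_angleAt hP.injective hE (hN y hy) (hN z hz) hyz
    (hgap y hy z hz hbetween) hbetween)

lemma exists_isFan_neighborSet [Finite V] (hS : IsSaturated G f) (hP : IsPlanarDrawing G f)
    (hE : E ≠ f x)
    (hx : ∀ y, G.Adj x y → ∃ w, G.Adj x w ∧ 0 < orient (f x) (f y) (f w)) :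
    ∃ ℓ, IsFan (IsFace G f) x (G.neighborSet x) ℓ ∧
      ℓ.Pairwise fun y z => angleAt (f x) E (f y) < angleAt (f x) E (f z) := by
  refine hS.exists_isFan hP hE (fun _ hy => hy) (fun _ _ _ _ w hw _ _ => hw)
    fun y hy z _ hbetween => ?_
  obtain ⟨w, hw, hyw⟩ := hx y hy
  have hbetween := hbetween w hw
  rw [orient_pos_iff_angleAt hE (hP.injective.ne hy.ne') (hP.injective.ne hw.ne')] at hyw
  rcases hyw with hyw | hyw
  · linarith [hbetween (by linarith)]
  · linarith [neg_pi_lt_angleAt (f x) E (f w), angleAt_le_pi (f x) E (f z)]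

lemma linkCycle [Finite V] (hS : IsSaturated G f) (hP : IsPlanarDrawing G f)
    (hx : ∀ E, E ≠ f x → ∃ w, 0 < orient (f x) E (f w)) : LinkCycle G (IsFace G f) x := by
  intro v hv
  have hx' (y : V) (hy : G.Adj x y) : ∃ w, G.Adj x w ∧ 0 < orient (f x) (f y) (f w) :=
    (hx _ (hP.injective.ne hy.ne')).elim fun _ hw => hS.exists_adj_orient_pos hP hw
  obtain ⟨E, hE, hEv⟩ : ∃ E, E ≠ f x ∧ angleAt (f x) E (f v) = Real.pi := by
    have hvx := hP.injective.ne hv.ne'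
    refine ⟨_, fun h => hvx ?_, angleAt_two_smul_sub hvx⟩
    rw [two_smul, sub_eq_iff_eq_add] at h
    exact (add_left_cancel h).symm
  have hmax (w : V) : angleAt (f x) E (f w) ≤ angleAt (f x) E (f v) := hEv ▸ angleAt_le_pi _ _ _
  obtain ⟨ℓ, hℓ, hsort⟩ := hS.exists_isFan_neighborSet hP hE hx'
  obtain ⟨m, rfl⟩ := List.getLast?_eq_some_iff.mp
    (getLast?_eq_some_of_pairwise_lt hsort ((hℓ.mem_iff v).mpr hv) fun w _ => hmax w)
  obtain ⟨w, hw, hvw⟩ := hx' v hv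
  have hwm : w ∈ m := by
    have hwv : w ≠ v := fun h => hvw.ne' (h ▸ orient_self_right _ _)
    simpa [hwv] using (hℓ.mem_iff w).mpr hw
  obtain ⟨h, k, rfl⟩ := List.exists_cons_of_ne_nil (List.ne_nil_of_mem hwm)
  have hh : G.Adj x h := (hℓ.mem_iff h).mp (by simp)
  have hmin (u : V) (hu : G.Adj x u) : angleAt (f x) E (f h) ≤ angleAt (f x) E (f u) := by
    rcases List.mem_cons.mp ((hℓ.mem_iff u).mpr hu) with rfl | hu
    · exact le_rfl
    · exact (List.rel_of_pairwise_cons hsort hu).le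
  exact ⟨h :: k, hℓ.of_append_singleton, ⟨h, rfl,
    (IsConvexCorner.of_forall_angleAt_le hP.injective hE hv hh hw hvw (fun w _ => hmax w)
      hmin).isFace hP hS⟩, k.getLastD h,
    by rw [List.getLast?_cons, List.getLastD_eq_getLast?], rel_getLastD_of_isChain hℓ.isChain⟩

lemma adj_of_isHullEdge (hS : IsSaturated G f) (hP : IsPlanarDrawing G f)
    (hab : IsHullEdge f a b) : G.Adj a b := by
  refine hS.adj hP hab.ne (fun c hca hcb hc => ?_) fun c d _ _ hd => ?_
  · exact (hab.orient_pos c hca hcb).ne' (orient_eq_zero_of_mem_segment hc)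
  · obtain ⟨hda, hdb⟩ := ne_of_orient_ne_zero hd.ne
    exact absurd hd (hab.orient_pos d (ne_of_apply_ne f hda) (ne_of_apply_ne f hdb)).not_gt

lemma linkPath [Fintype V] (hS : IsSaturated G f) (hP : IsPlanarDrawing G f)
    (hb : IsHullEdge f a b) (hc : IsHullEdge f c a) (hbc : b ≠ c) :
    LinkPath G (IsFace G f) Finset.univ b a c := by
  have hab := hS.adj_of_isHullEdge hP hb
  have hac := (hS.adj_of_isHullEdge hP hc).symm
  have hE : f b ≠ f a := hP.injective.ne hab.ne'
  have hpos {y z : V} (hy : y ≠ a) (hz : z ≠ a) :=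
    orient_pos_iff_angleAt hE (hP.injective.ne hy) (hP.injective.ne hz)
  have hangle (w : V) (hwa : w ≠ a) :
      0 ≤ angleAt (f a) (f b) (f w) ∧ angleAt (f a) (f b) (f w) < Real.pi := by
    by_cases hwb : w = b
    · simp [hwb, angleAt_self, Real.pi_pos]
    · have h := hb.orient_pos w hwa hwb
      rw [hpos hab.ne' hwa, angleAt_self, sub_zero] at h
      exact (h.resolve_right (neg_pi_lt_angleAt _ _ _).not_gt).imp_left le_of_lt
  obtain ⟨ℓ, hℓ, hsort⟩ := hS.exists_isFan hP hE (N := {y | G.Adj a y ∧ y ∈ Finset.univ})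
    (fun _ hy => hy.1) (fun _ _ _ _ w hw _ _ => ⟨hw, Finset.mem_univ w⟩)
    fun y hy z hz _ => by linarith [hangle y hy.1.ne', hangle z hz.1.ne']
  have hadj {w : V} (hw : w ∈ ℓ) : w ≠ a := ((hℓ.mem_iff w).mp hw).1.ne'
  refine ⟨ℓ, hℓ, head?_eq_some_of_pairwise_lt hsort ((hℓ.mem_iff b).mpr ⟨hab, Finset.mem_univ b⟩)
    fun w hw => ?_, getLast?_eq_some_of_pairwise_lt hsort
    ((hℓ.mem_iff c).mpr ⟨hac, Finset.mem_univ c⟩) fun w hw => ?_, fun hface => ?_⟩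
  · rw [angleAt_self]
    exact (hangle w (hadj hw)).1
  · by_cases hwc : w = c
    · rw [hwc]
    have h := hc.orient_pos w hwc (hadj hw)
    rw [orient_rotate, hpos (hadj hw) hac.ne'] at h
    rcases h with h | h <;> linarith [hangle w (hadj hw), hangle c hac.ne']
  · have h := hb.orient_pos c hac.ne' hbc.symm
    rw [orient_swap] at h
    linarith [hface.1.orient_pos]

lemma exists_lower_fan [Finite V] (hS : IsSaturated G f) (hP : IsPlanarDrawing G f) (p : V) :
    ∃ ℓ : List V, ℓ.IsChain (IsFace G f p) ∧
      ∀ q, q ∈ ℓ ↔ G.Adj p q ∧ toLex (f q) < toLex (f p) := by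
  have hE : f p - (1, 0) ≠ f p := by simp [Prod.ext_iff]
  have hlex {q : V} (hq : G.Adj p q) := toLex_lt_toLex_iff_angleAt (hP.injective.ne hq.ne')
  obtain ⟨ℓ, hℓ, -⟩ := hS.exists_isFan hP hE (N := {q | G.Adj p q ∧ toLex (f q) < toLex (f p)})
    (fun _ hq => hq.1)
    (fun y ⟨hy, hyp⟩ z ⟨hz, hzp⟩ w hw hyw hwz => by
      rw [hlex hy] at hyp
      rw [hlex hz] at hzp
      exact ⟨hw, (hlex hw).mpr ⟨by linarith, by linarith⟩⟩)
    fun y ⟨hy, hyp⟩ z ⟨hz, hzp⟩ _ => by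
      rw [hlex hy] at hyp
      rw [hlex hz] at hzp
      linarith
  exact ⟨ℓ, hℓ.isChain, hℓ.mem_iff⟩

end IsSaturated

end Fan

/-! ### Completing a drawing inside a large triangle -/

section OuterTriangle

variable {V : Type*} {G : SimpleGraph V} {f : V → ℝ × ℝ} {a b c x : V} {E : ℝ × ℝ} {R : ℝ}

lemma exists_orient_pos_of_orient_pos {A B C X : ℝ × ℝ} (hE : E ≠ X) (hA : 0 < orient B C X)
    (hB : 0 < orient C A X) (hC : 0 < orient A B X) :
    0 < orient X E A ∨ 0 < orient X E B ∨ 0 < orient X E C := by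
  by_contra! h
  obtain ⟨hEA, hEB, hEC⟩ := h
  have hsum : orient B C X * orient X E A + orient C A X * orient X E B +
      orient A B X * orient X E C = 0 := by
    simp only [orient]
    ring
  have hEA : orient X E A = 0 := by nlinarith
  have hEB : orient X E B = 0 := by nlinarith
  have hprod : ((E.1 - X.1) ^ 2 + (E.2 - X.2) ^ 2) * orient A B X = 0 := by
    simp only [orient] at hEA hEB ⊢
    linear_combination ((E.1 - X.1) * (A.1 - X.1) + (E.2 - X.2) * (A.2 - X.2)) * hEB -
      ((E.1 - X.1) * (B.1 - X.1) + (E.2 - X.2) * (B.2 - X.2)) * hEA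
  exact (mul_pos (dist_sq_pos hE) hC).ne' hprod

lemma IsHullEdge.exists_orient_pos (hab : IsHullEdge f a b) (hbc : IsHullEdge f b c)
    (hca : IsHullEdge f c a) (hxa : x ≠ a) (hxb : x ≠ b) (hxc : x ≠ c) (hE : E ≠ f x) :
    ∃ w, 0 < orient (f x) E (f w) := by
  rcases exists_orient_pos_of_orient_pos hE (hbc.orient_pos x hxb hxc)
    (hca.orient_pos x hxc hxa) (hab.orient_pos x hxa hxb) with h | h | h
  exacts [⟨a, h⟩, ⟨b, h⟩, ⟨c, h⟩]

lemma IsSaturated.exists_isRealizer [Finite V] (hS : IsSaturated G f) (hP : IsPlanarDrawing G f)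
    (hab : IsHullEdge f a b) (hbc : IsHullEdge f b c) (hca : IsHullEdge f c a) :
    ∃ κ : Fin 3 → V → ℝ, IsRealizer G κ := by
  have := Fintype.ofFinite V
  have hinner (x : V) (hxa : x ≠ a) (hxb : x ≠ b) (hxc : x ≠ c) (E : ℝ × ℝ) (hE : E ≠ f x) :=
    hab.exists_orient_pos hbc hca hxa hxb hxc hE
  refine exists_isRealizer_of_triangulation hP.isTriangleSystem
    (toLex.injective.comp hP.injective) (hS.exists_lower_fan hP) (hS.linkPath hP hab hca hbc.ne)
    (hS.linkPath hP hbc hab hca.ne) (hS.linkPath hP hca hbc hab.ne)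
    (fun x hxa hxb hxc => hS.linkCycle hP (hinner x hxa hxb hxc)) fun U hU haU hbU hcU => ?_
  obtain ⟨x, hxU, hmax⟩ := U.exists_max_image (fun u => (f u).1) hU
  obtain ⟨w, hw⟩ := hinner x (ne_of_mem_of_not_mem hxU haU) (ne_of_mem_of_not_mem hxU hbU)
    (ne_of_mem_of_not_mem hxU hcU) ((f x).1, (f x).2 - 1) (by simp [Prod.ext_iff])
  obtain ⟨y, hxy, hy⟩ := hS.exists_adj_orient_pos hP hw
  refine ⟨x, hxU, y, fun hyU => ?_, hxy⟩
  have hle := hmax y hyU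
  simp only [orient] at hy
  linarith

/-- The corners of a triangle, listed counterclockwise, that contains the open square of radius `R`
around the origin, i.e. the ball for the supremum norm on `ℝ × ℝ`. -/
def outerPoint (R : ℝ) : Fin 3 → ℝ × ℝ := ![(-R, -R), (3 * R, -R), (-R, 3 * R)]

lemma outerPoint_notMem_ball (hR : 0 < R) (i : Fin 3) : outerPoint R i ∉ Metric.ball 0 R := by
  have h (P : ℝ × ℝ) (hP : R ≤ |P.1|) : P ∉ Metric.ball 0 R := by
    rw [mem_ball_zero_iff, not_lt]
    exact hP.trans (norm_fst_le P)
  apply h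
  fin_cases i <;> simp [outerPoint, abs_of_pos hR]
  linarith

lemma outerPoint_injective (hR : 0 < R) : Function.Injective (outerPoint R) := by
  intro i j h
  fin_cases i <;> fin_cases j <;> first | rfl | (simp [outerPoint] at h; linarith)

lemma orient_outerPoint_pos {P : ℝ × ℝ} (hP : P ∈ Metric.ball 0 R) (i : Fin 3) :
    0 < orient (outerPoint R i) (outerPoint R (i + 1)) P := by
  obtain ⟨⟨h₁, h₁'⟩, h₂, h₂'⟩ : (-R < P.1 ∧ P.1 < R) ∧ -R < P.2 ∧ P.2 < R := by
    simpa [Prod.norm_def, abs_lt] using hP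
  fin_cases i <;> simp [outerPoint, orient] <;> nlinarith

lemma orient_outerPoint_outerPoint (R : ℝ) (i : Fin 3) :
    orient (outerPoint R i) (outerPoint R (i + 1)) (outerPoint R (i + 2)) = 16 * R ^ 2 := by
  fin_cases i <;> simp [outerPoint, orient] <;> ring

lemma isHullEdge_outerPoint (hR : 0 < R) (hf : ∀ v, f v ∈ Metric.ball 0 R) (i : Fin 3) :
    IsHullEdge (Sum.elim f (outerPoint R)) (Sum.inr i) (Sum.inr (i + 1)) := by
  refine ⟨by simp, Sum.rec (fun v _ _ => orient_outerPoint_pos (hf v) i) fun j hji hji' => ?_⟩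
  obtain rfl : j = i + 2 := by
    simp only [ne_eq, Sum.inr.injEq] at hji hji'
    omega
  simp only [Sum.elim_inr, orient_outerPoint_outerPoint]
  positivity

lemma IsPlanarDrawing.exists_isRealizer [Finite V] (hP : IsPlanarDrawing G f) :
    ∃ κ : Fin 3 → V → ℝ, IsRealizer G κ := by
  obtain ⟨R, hR, hfR⟩ := (Set.finite_range f).isBounded.subset_ball_lt 0 0
  have hf (v : V) : f v ∈ Metric.ball 0 R := hfR ⟨v, rfl⟩
  obtain ⟨H, hGH, hH, hS⟩ := (hP.map_inl (outerPoint_injective hR) (convex_ball 0 R) hf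
    (outerPoint_notMem_ball hR)).exists_isSaturated
  have hhull := isHullEdge_outerPoint hR hf
  obtain ⟨κ, hκ⟩ := hS.exists_isRealizer hH (hhull 0) (hhull 1) (hhull 2)
  exact ⟨_, hκ.comp_hom ((SimpleGraph.Hom.ofLE hGH).comp (SimpleGraph.Embedding.map _ G).toHom)
    Sum.inl_injective⟩

lemma IsPlanarDrawing.sepDim_le_three [Fintype V] (hP : IsPlanarDrawing G f) : sepDim G ≤ 3 :=
  hP.exists_isRealizer.elim fun _ hκ => hκ.sepDim_le_three

end OuterTriangle

/-! ### The complete graph on four vertices -/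

section CompleteGraph

lemma isRealizer_top_fin_four :
    IsRealizer (⊤ : SimpleGraph (Fin 4))
      fun (i : Fin 3) v => if v = i.castSucc then 2 else if v = 3 then 1 else 0 := by
  unfold IsRealizer
  decide

/-- The three pairs of disjoint edges of `K₄` are indexed by the partner `p + 1` of the
vertex `0`. -/
lemma eq_of_sepPerm {n : ℕ} (σ : Fin 4 ≃ Fin n) {p q : Fin 3}
    (hp : SepPerm σ {x | x ∈ s(0, p.succ)} {x | x ∈ s((p + 1).succ, (p + 2).succ)})
    (hq : SepPerm σ {x | x ∈ s(0, q.succ)} {x | x ∈ s((q + 1).succ, (q + 2).succ)}) :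
    p = q := by
  simp only [SepPerm, Set.mem_ofPred_eq, Sym2.mem_iff, forall_eq_or_imp, forall_eq,
    Fin.lt_def] at hp hq
  fin_cases p <;> fin_cases q <;> simp at hp hq ⊢ <;> omega

lemma three_le_of_pwSuitable {k : ℕ} {F : Fin k → (Fin 4 ≃ Fin (Fintype.card (Fin 4)))}
    (hF : PWSuitable ⊤ F) : 3 ≤ k := by
  have hsep (p : Fin 3) : ∃ i, SepPerm (F i) {x | x ∈ s(0, p.succ)}
      {x | x ∈ s((p + 1).succ, (p + 2).succ)} := by
    apply hF <;> fin_cases p <;> simp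
  choose i hi using hsep
  have hinj : Function.Injective i := fun p q hpq => eq_of_sepPerm (F (i p)) (hi p) (hpq ▸ hi q)
  simpa using Fintype.card_le_of_injective i hinj

lemma sepDim_top_fin_four : sepDim (⊤ : SimpleGraph (Fin 4)) = 3 :=
  le_antisymm isRealizer_top_fin_four.sepDim_le_three
    (le_csInf ⟨3, isRealizer_top_fin_four.exists_pwSuitable⟩
      fun _ ⟨_, hF⟩ => three_le_of_pwSuitable hF)

end CompleteGraph

/-- Every planar graph has separation dimension at most `3`, and `K₄` has
separation dimension exactly `3`. -/
theorem stmt13 :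
    (∀ (V : Type) [Fintype V] [DecidableEq V] (G : SimpleGraph V)
        (f : V → ℝ × ℝ), IsPlanarDrawing G f → sepDim G ≤ 3) ∧
    sepDim (⊤ : SimpleGraph (Fin 4)) = 3 :=
  ⟨fun _ _ _ _ _ hP => hP.sepDim_le_three, sepDim_top_fin_four⟩
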